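/- arXiv:1504.01148 — 2 statements merged into one kernel-verified Lean document; each statement's English description precedes it below -/
import Mathlib

section
/- Let R be a commutative Noetherian ring, M an R-module (not necessarily finitely generated), and let S be a Serre subcategory of the category of R-modules. Let I and J be two ideals of R with c = cd(I,M), and let t be a positive integer. Suppose that H^{t+i}_J(H^{c−i}_I(M)) belongs to S for all i with 0 < i ≤ c, and that H^{t+c}_{I+J}(M) does not belong to S. Then H^t_J(H^c_I(M)) does not belong to S. -/
universe u

open CategoryTheory

/-- The cohomological dimension of `M` with respect to `I`:
`cd(I,M) = sup { i ∈ ℕ | H^i_I(M) ≠ 0 }`, as an element of `ℕ∞`. -/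
noncomputable def cohomologicalDimension {R : Type u} [CommRing R] (I : Ideal R)
    (M : ModuleCat.{u} R) : ℕ∞ :=
  sSup {c : ℕ∞ | ∃ i : ℕ, c = i ∧ Nontrivial ((localCohomology I i).obj M)}

open Limits Opposite

/-!
In the Grothendieck spectral sequence `Hᵖ_J(H^q_I(M)) ⇒ H^{p+q}_{I+J}(M)`, every term with
`p + q = t + c` other than `H^t_J(H^c_I(M))` lies in `S`: by assumption for `q < c`, and because it
vanishes for `q > c`. If `H^t_J(H^c_I(M))` were in `S` too, then so would be the abutment
`H^{t+c}_{I+J}(M)`.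

This consequence of the spectral sequence is obtained by dimension shifting along
`0 ⟶ M ⟶ E ⟶ N ⟶ 0` with `E` injective, working with morphisms that are epimorphisms up to a
cokernel in `S`. The inputs are the long exact sequences of local cohomology, a colimit of those of
`Ext`, and two facts about `H⁰_I`, the functor of `I`-power torsion elements: the composite of
`H⁰_I` and `H⁰_J` is `H⁰_{I+J}`, and `H⁰_I` preserves injectives, by the Artin–Rees lemma.
-/

section ExactPair

variable {A B : Type*} [Category* A] [Category* B] [Abelian A] [Abelian B]

/-- Exactness of `X ⟶ Y ⟶ Z` at `Y`. The vanishing of the composite is part of the property, so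
that connecting morphisms can be quantified existentially in `HasLongExactSequences`. -/
def ExactPair {X Y Z : A} (f : X ⟶ Y) (g : Y ⟶ Z) : Prop :=
  ∃ w : f ≫ g = 0, (ShortComplex.mk f g w).Exact

namespace ExactPair

variable {X Y Z X' Y' Z' : A} {f : X ⟶ Y} {g : Y ⟶ Z} {f' : X' ⟶ Y'} {g' : Y' ⟶ Z'}

lemma of_iso (h : ExactPair f g) (e₁ : X ≅ X') (e₂ : Y ≅ Y') (e₃ : Z ≅ Z')
    (hf : f ≫ e₂.hom = e₁.hom ≫ f') (hg : g ≫ e₃.hom = e₂.hom ≫ g') : ExactPair f' g' := by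
  obtain ⟨w, h⟩ := h
  have w' : f' ≫ g' = 0 := by
    rw [← cancel_epi e₁.hom, ← reassoc_of% hf, ← hg, reassoc_of% w, zero_comp, comp_zero]
  exact ⟨w', ShortComplex.exact_of_iso
    (ShortComplex.isoMk (S₂ := ShortComplex.mk f' g' w') e₁ e₂ e₃ hf.symm hg.symm) h⟩

lemma map (h : ExactPair f g) (Φ : A ⥤ B) [PreservesFiniteLimits Φ] [PreservesFiniteColimits Φ] :
    ExactPair (Φ.map f) (Φ.map g) := by
  obtain ⟨w, h⟩ := h
  exact ⟨by rw [← Φ.map_comp, w, Φ.map_zero], h.map Φ⟩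

lemma unop {X Y Z : Aᵒᵖ} {f : X ⟶ Y} {g : Y ⟶ Z} (h : ExactPair f g) :
    ExactPair g.unop f.unop := by
  obtain ⟨w, h⟩ := h
  exact ⟨by rw [← unop_comp, w, unop_zero], h.unop⟩

lemma of_comp_mono {W : A} {i : Z ⟶ W} [Mono i] (h : ExactPair f (g ≫ i)) : ExactPair f g := by
  obtain ⟨w, h⟩ := h
  have w' : f ≫ g = 0 := by rwa [← cancel_mono i, Category.assoc, zero_comp]
  let φ : ShortComplex.mk f g w' ⟶ ShortComplex.mk f (g ≫ i) w := { τ₁ := 𝟙 X, τ₂ := 𝟙 Y, τ₃ := i }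
  exact ⟨w', (ShortComplex.exact_iff_of_epi_of_isIso_of_mono φ).2 h⟩

lemma of_epi_comp {W : A} {p : W ⟶ X} [Epi p] (h : ExactPair (p ≫ f) g) : ExactPair f g := by
  obtain ⟨w, h⟩ := h
  have w' : f ≫ g = 0 := by rwa [← cancel_epi p, ← Category.assoc, comp_zero]
  let φ : ShortComplex.mk (p ≫ f) g w ⟶ ShortComplex.mk f g w' := { τ₁ := p, τ₂ := 𝟙 Y, τ₃ := 𝟙 Z }
  exact ⟨w', (ShortComplex.exact_iff_of_epi_of_isIso_of_mono φ).1 h⟩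

lemma mono_of_isZero (h : ExactPair f g) (hX : IsZero X) : Mono g := by
  obtain ⟨_, h⟩ := h
  exact h.mono_g (hX.eq_zero_of_src f)

lemma epi_of_isZero (h : ExactPair f g) (hZ : IsZero Z) : Epi f := by
  obtain ⟨_, h⟩ := h
  exact h.epi_f (hZ.eq_zero_of_tgt g)

lemma of_app {K : Type*} [Category* K] {F G H : K ⥤ A} {α : F ⟶ G} {β : G ⟶ H}
    (h : ∀ k, ExactPair (α.app k) (β.app k)) : ExactPair α β := by
  have w : α ≫ β = 0 := by ext k; exact (h k).1
  refine ⟨w, ?_⟩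
  rw [ShortComplex.exact_iff_isZero_homology, Functor.isZero_iff]
  intro k
  refine IsZero.of_iso ?_ ((ShortComplex.mk α β w).mapHomologyIso ((evaluation K A).obj k)).symm
  rw [← ShortComplex.exact_iff_isZero_homology]
  exact (h k).2

end ExactPair

end ExactPair

section ModSerre

variable {A : Type*} [Category* A] [Abelian A] (P : ObjectProperty A) [P.IsSerreClass]
  {X Y Z : A} {f : X ⟶ Y} {g : Y ⟶ Z}

lemma ExactPair.epiModSerre (h : ExactPair f g) (hZ : P Z) : P.epiModSerre f := by
  obtain ⟨w, h⟩ := h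
  have := h.mono_cokernelDesc
  exact P.prop_of_mono (cokernel.desc f g w) hZ

lemma prop_of_epiModSerre_of_comp_eq_zero (w : f ≫ g = 0) [Epi g] (hf : P.epiModSerre f) :
    P Z := by
  have := epi_of_epi_fac (cokernel.π_desc f g w)
  exact P.prop_of_epi (cokernel.desc f g w) hf

lemma prop_of_epiModSerre_of_isZero (hf : P.epiModSerre f) (hX : IsZero X) : P Y := by
  obtain rfl : f = 0 := hX.eq_zero_of_src f
  exact (P.epiModSerre_zero_iff X Y).1 hf

end ModSerre

section DerivedFamily

variable {A B C : Type*} [Category* A] [Category* B] [Category* C]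
  [Abelian A] [Abelian B] [Abelian C]

/-- A family of functors `F⁰, F¹, …` sending every short exact sequence `S` to a long exact sequence
`0 ⟶ F⁰ S.X₁ ⟶ F⁰ S.X₂ ⟶ F⁰ S.X₃ ⟶ F¹ S.X₁ ⟶ ⋯`. Unlike for a cohomological `δ`-functor, the
connecting morphisms are not required to be natural in `S`. -/
structure HasLongExactSequences (F : ℕ → A ⥤ B) : Prop where
  mono_map : ∀ ⦃S : ShortComplex A⦄, S.ShortExact → Mono ((F 0).map S.f)
  exact_map : ∀ ⦃S : ShortComplex A⦄, S.ShortExact → ∀ n,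
    ExactPair ((F n).map S.f) ((F n).map S.g)
  exists_connecting : ∀ ⦃S : ShortComplex A⦄, S.ShortExact → ∀ n,
    ∃ δ : (F n).obj S.X₃ ⟶ (F (n + 1)).obj S.X₁,
      ExactPair ((F n).map S.g) δ ∧ ExactPair δ ((F (n + 1)).map S.f)

/-- A family of functors with long exact sequences whose terms of positive degree vanish on
injective objects, as the right derived functors of a left exact functor do. -/
structure IsRightDerivedFamily (F : ℕ → A ⥤ B) : Prop extends HasLongExactSequences F where
  isZero_of_injective : ∀ n (E : A) [Injective E], IsZero ((F (n + 1)).obj E)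

lemma HasLongExactSequences.of_iso {F G : ℕ → A ⥤ B} (hF : HasLongExactSequences F)
    (e : ∀ n, F n ≅ G n) : HasLongExactSequences G where
  mono_map S hS := by
    have := hF.mono_map hS
    rw [← NatIso.naturality_1 (e 0) S.f]
    infer_instance
  exact_map S hS n := (hF.exact_map hS n).of_iso ((e n).app _) ((e n).app _) ((e n).app _)
    ((e n).hom.naturality _) ((e n).hom.naturality _)
  exists_connecting S hS n := by
    obtain ⟨δ, h₁, h₂⟩ := hF.exists_connecting hS n
    refine ⟨(e n).inv.app _ ≫ δ ≫ (e (n + 1)).hom.app _, ?_, ?_⟩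
    · exact h₁.of_iso ((e n).app _) ((e n).app _) ((e (n + 1)).app _)
        ((e n).hom.naturality _) (by simp)
    · exact h₂.of_iso ((e n).app _) ((e (n + 1)).app _) ((e (n + 1)).app _) (by simp)
        ((e (n + 1)).hom.naturality _)

lemma HasLongExactSequences.comp {F : ℕ → A ⥤ B} (hF : HasLongExactSequences F) (Φ : B ⥤ C)
    [PreservesFiniteLimits Φ] [PreservesFiniteColimits Φ] :
    HasLongExactSequences fun n ↦ F n ⋙ Φ where
  mono_map S hS := by
    have := hF.mono_map hS
    exact inferInstanceAs (Mono (Φ.map ((F 0).map S.f)))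
  exact_map S hS n := (hF.exact_map hS n).map Φ
  exists_connecting S hS n := by
    obtain ⟨δ, h₁, h₂⟩ := hF.exists_connecting hS n
    exact ⟨Φ.map δ, h₁.map Φ, h₂.map Φ⟩

lemma HasLongExactSequences.isZero_obj {F : ℕ → A ⥤ B} (hF : HasLongExactSequences F) (n : ℕ)
    {X : A} (hX : IsZero X) : IsZero ((F n).obj X) := by
  have hS : (ShortComplex.mk (𝟙 X) (𝟙 X) (hX.eq_of_src _ _)).ShortExact :=
    .mk' (ShortComplex.exact_of_isZero_X₂ _ hX) inferInstance inferInstance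
  obtain ⟨w, -⟩ := hF.exact_map hS n
  rw [IsZero.iff_id_eq_zero]
  simpa using w

namespace IsRightDerivedFamily

lemma of_iso {F G : ℕ → A ⥤ B} (hF : IsRightDerivedFamily F) (e : ∀ n, F n ≅ G n) :
    IsRightDerivedFamily G where
  toHasLongExactSequences := hF.toHasLongExactSequences.of_iso e
  isZero_of_injective n E _ := (hF.isZero_of_injective n E).of_iso ((e (n + 1)).app E).symm

lemma comp {F : ℕ → A ⥤ B} (hF : IsRightDerivedFamily F) (Φ : B ⥤ C)
    [PreservesFiniteLimits Φ] [PreservesFiniteColimits Φ] :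
    IsRightDerivedFamily fun n ↦ F n ⋙ Φ where
  toHasLongExactSequences := hF.toHasLongExactSequences.comp Φ
  isZero_of_injective n E _ := Φ.map_isZero (hF.isZero_of_injective n E)

variable {F : ℕ → A ⥤ B} (hF : IsRightDerivedFamily F) {S : ShortComplex A} (hS : S.ShortExact)
  [Injective S.X₂]

include hF hS in
lemma nonempty_iso (n : ℕ) : Nonempty ((F (n + 1)).obj S.X₃ ≅ (F (n + 2)).obj S.X₁) := by
  obtain ⟨δ, h₁, h₂⟩ := hF.exists_connecting hS (n + 1)
  have := h₁.mono_of_isZero (hF.isZero_of_injective n S.X₂)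
  have := h₂.epi_of_isZero (hF.isZero_of_injective (n + 1) S.X₂)
  have := isIso_of_mono_of_epi δ
  exact ⟨asIso δ⟩

variable {G : ℕ → B ⥤ C} {P : ObjectProperty C} [P.IsSerreClass]

include hF hS in
/-- `G n` is applied to the two short exact sequences into which the image of
`F⁰ S.X₂ ⟶ F⁰ S.X₃` splits the long exact sequence of `S`. -/
lemma epiModSerre_map_map (hG : HasLongExactSequences G) (n : ℕ)
    (h₀ : P ((G (n + 1)).obj ((F 0).obj S.X₁))) (h₁ : P ((G n).obj ((F 1).obj S.X₁))) :
    P.epiModSerre ((G n).map ((F 0).map S.g)) := by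
  obtain ⟨δ, hδ, hδ'⟩ := hF.exists_connecting hS 0
  have hfg := hF.exact_map hS 0
  rw [← image.fac ((F 0).map S.g)] at hδ hfg ⊢
  obtain ⟨w, hw⟩ := hfg.of_comp_mono
  obtain ⟨v, hv⟩ := hδ.of_epi_comp
  have := hF.mono_map hS
  have := hδ'.epi_of_isZero (hF.isZero_of_injective 0 S.X₂)
  obtain ⟨δ', hδ', -⟩ := hG.exists_connecting (.mk' hw inferInstance inferInstance) n
  have hι := hG.exact_map (.mk' hv inferInstance inferInstance) n
  rw [Functor.map_comp]
  exact P.epiModSerre.comp_mem _ _ (hδ'.epiModSerre P h₀) (hι.epiModSerre P h₁)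

/-- A shadow of the Grothendieck spectral sequence `Gᵖ(F^q M) ⇒ H^{p+q} M`, proved by shifting
dimensions along an embedding of `M` into an injective object. -/
theorem prop_of_comp [EnoughInjectives A] {H : ℕ → A ⥤ C}
    (hF : IsRightDerivedFamily F) (hG : HasLongExactSequences G) (hH : IsRightDerivedFamily H)
    (hFG : ∀ p (E : A) [Injective E], IsZero ((G (p + 1)).obj ((F 0).obj E)))
    (e : F 0 ⋙ G 0 ≅ H 0) (n : ℕ) (M : A)
    (hM : ∀ p q, p + q = n → P ((G p).obj ((F q).obj M))) : P ((H n).obj M) := by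
  induction n generalizing M with
  | zero => exact P.prop_of_iso (e.app M) (hM 0 0 rfl)
  | succ n ih =>
    let S := ShortComplex.mk (Injective.ι M) (cokernel.π _) (cokernel.condition _)
    have hS : S.ShortExact := .mk' (ShortComplex.exact_cokernel _) inferInstance inferInstance
    have hE : Injective S.X₂ := inferInstanceAs (Injective (Injective.under M))
    have hSg : P.epiModSerre ((G n).map ((F 0).map S.g)) :=
      hF.epiModSerre_map_map hS hG n (hM _ 0 rfl) (hM _ 1 rfl)
    obtain ⟨δ, h₁, h₂⟩ := hH.exists_connecting hS n
    have := h₂.epi_of_isZero (hH.isZero_of_injective n S.X₂)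
    refine prop_of_epiModSerre_of_comp_eq_zero P h₁.1 ?_
    cases n with
    | zero =>
      rw [← NatIso.naturality_1 e S.g]
      exact P.epiModSerre.comp_mem _ _ (P.epiModSerre_of_epi _)
        (P.epiModSerre.comp_mem _ _ hSg (P.epiModSerre_of_epi _))
    | succ n =>
      refine P.prop_of_epi (cokernel.π _) (ih S.X₃ fun p q hpq ↦ ?_)
      cases q with
      | zero =>
        obtain rfl : p = n + 1 := hpq
        exact prop_of_epiModSerre_of_isZero P hSg (hFG n S.X₂)
      | succ q =>
        obtain ⟨i⟩ := hF.nonempty_iso hS q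
        exact P.prop_of_iso ((G p).mapIso i.symm) (hM p (q + 2) (by lia))

end IsRightDerivedFamily

end DerivedFamily

section LeftDerivedSequence

variable {C D : Type*} [Category* C] [Category* D] [Abelian C] [Abelian D]

section

variable (T : ShortComplex (C ⥤ D)) [T.X₁.Additive] [T.X₂.Additive] [T.X₃.Additive]

/-- The short complex of chain complexes obtained by applying a short complex of additive functors
to a chain complex. -/
abbrev evalChainComplex (K : ChainComplex C ℕ) : ShortComplex (ChainComplex D ℕ) where
  X₁ := (T.X₁.mapHomologicalComplex _).obj K
  X₂ := (T.X₂.mapHomologicalComplex _).obj K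
  X₃ := (T.X₃.mapHomologicalComplex _).obj K
  f := (NatTrans.mapHomologicalComplex T.f _).app K
  g := (NatTrans.mapHomologicalComplex T.g _).app K
  zero := by
    ext i
    exact NatTrans.congr_app T.zero (K.X i)

/-- The functoriality of `evalChainComplex` in the chain complex. -/
abbrev evalChainComplexMap {K L : ChainComplex C ℕ} (φ : K ⟶ L) :
    evalChainComplex T K ⟶ evalChainComplex T L where
  τ₁ := (T.X₁.mapHomologicalComplex _).map φ
  τ₂ := (T.X₂.mapHomologicalComplex _).map φ
  τ₃ := (T.X₃.mapHomologicalComplex _).map φ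
  comm₁₂ := (NatTrans.mapHomologicalComplex T.f _).naturality φ
  comm₂₃ := (NatTrans.mapHomologicalComplex T.g _).naturality φ

variable {T} in
lemma evalChainComplex_shortExact
    (hT : ∀ X [Projective X], (T.map ((evaluation C D).obj X)).ShortExact)
    (K : ChainComplex C ℕ) [∀ i, Projective (K.X i)] : (evalChainComplex T K).ShortExact :=
  HomologicalComplex.shortExact_of_degreewise_shortExact _ fun i ↦ hT (K.X i)

end

variable [HasProjectiveResolutions C] {F G : C ⥤ D} [F.Additive] [G.Additive] {X Y : C}

/-- `ProjectiveResolution.isoLeftDerivedObj` with its target spelled as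
`HomologicalComplex.homology`, the form in which the homology long exact sequence is stated. -/
noncomputable def leftDerivedIsoHomology (K : ProjectiveResolution X) (F : C ⥤ D) [F.Additive]
    (n : ℕ) : (F.leftDerived n).obj X ≅ ((F.mapHomologicalComplex _).obj K.complex).homology n :=
  K.isoLeftDerivedObj F n

lemma leftDerived_app_comp_leftDerivedIsoHomology_hom (K : ProjectiveResolution X) (α : F ⟶ G)
    (n : ℕ) : (NatTrans.leftDerived α n).app X ≫ (leftDerivedIsoHomology K G n).hom =
      (leftDerivedIsoHomology K F n).hom ≫ HomologicalComplex.homologyMap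
        ((NatTrans.mapHomologicalComplex α _).app K.complex) n := by
  rw [← Iso.eq_comp_inv, Category.assoc]
  exact K.leftDerived_app_eq α n

lemma leftDerived_map_comp_leftDerivedIsoHomology_hom (f : X ⟶ Y) (K : ProjectiveResolution X)
    (L : ProjectiveResolution Y) (F : C ⥤ D) [F.Additive] (n : ℕ) :
    (F.leftDerived n).map f ≫ (leftDerivedIsoHomology L F n).hom =
      (leftDerivedIsoHomology K F n).hom ≫ HomologicalComplex.homologyMap
        ((F.mapHomologicalComplex _).map (ProjectiveResolution.lift f K L)) n :=
  ProjectiveResolution.isoLeftDerivedObj_hom_naturality f K L _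
    (ProjectiveResolution.lift_commutes_zero f K L) F n

lemma leftDerived_app_comp_fromLeftDerivedZero (α : F ⟶ G) (X : C) :
    (NatTrans.leftDerived α 0).app X ≫ G.fromLeftDerivedZero.app X =
      F.fromLeftDerivedZero.app X ≫ α.app X := by
  let K := projectiveResolution X
  have h_eq (F : C ⥤ D) [F.Additive] : F.fromLeftDerivedZero.app X =
      (leftDerivedIsoHomology K F 0).hom ≫ HomologicalComplex.homologyι _ 0 ≫
        K.fromLeftDerivedZero' F :=
    K.fromLeftDerivedZero_eq F
  have h_opcycles : HomologicalComplex.opcyclesMap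
      ((NatTrans.mapHomologicalComplex α _).app K.complex) 0 ≫ K.fromLeftDerivedZero' G =
        K.fromLeftDerivedZero' F ≫ α.app X := by
    suffices α.app (K.complex.X 0) ≫ G.map (K.π.f 0) = F.map (K.π.f 0) ≫ α.app X by
      simpa [← cancel_epi (HomologicalComplex.pOpcycles _ _)]
    exact (α.naturality _).symm
  simp only [h_eq, reassoc_of% leftDerived_app_comp_leftDerivedIsoHomology_hom, Category.assoc,
    ← h_opcycles, HomologicalComplex.homologyι_naturality_assoc]

variable {T : ShortComplex (C ⥤ D)} [T.X₁.Additive] [T.X₂.Additive] [T.X₃.Additive]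
  (hT : ∀ X [Projective X], (T.map ((evaluation C D).obj X)).ShortExact)

/-- The connecting transformation of the long exact sequence of left derived functors. -/
noncomputable def leftDerivedδ (n : ℕ) : T.X₃.leftDerived (n + 1) ⟶ T.X₁.leftDerived n where
  app X := (leftDerivedIsoHomology (projectiveResolution X) T.X₃ (n + 1)).hom ≫
    (evalChainComplex_shortExact hT (projectiveResolution X).complex).δ (n + 1) n rfl ≫
      (leftDerivedIsoHomology (projectiveResolution X) T.X₁ n).inv
  naturality X Y f := by
    have hδ := HomologicalComplex.HomologySequence.δ_naturality
      (evalChainComplexMap T (ProjectiveResolution.lift f _ _))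
      (evalChainComplex_shortExact hT (projectiveResolution X).complex)
      (evalChainComplex_shortExact hT (projectiveResolution Y).complex) (n + 1) n rfl
    rw [← cancel_mono (leftDerivedIsoHomology (projectiveResolution Y) T.X₁ n).hom]
    simp only [Category.assoc, Iso.inv_hom_id, Category.comp_id,
      leftDerived_map_comp_leftDerivedIsoHomology_hom f (projectiveResolution X)]
    rw [Iso.inv_hom_id_assoc, hδ, ← Category.assoc, ← Category.assoc,
      leftDerived_map_comp_leftDerivedIsoHomology_hom f (projectiveResolution X)]

include hT in
lemma exactPair_leftDerived (n : ℕ) (X : C) :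
    ExactPair ((NatTrans.leftDerived T.f n).app X) ((NatTrans.leftDerived T.g n).app X) := by
  let K := projectiveResolution X
  refine ExactPair.of_iso ⟨_, (evalChainComplex_shortExact hT K.complex).homology_exact₂ n⟩
    (leftDerivedIsoHomology K _ n).symm (leftDerivedIsoHomology K _ n).symm
    (leftDerivedIsoHomology K _ n).symm ?_ ?_
  · simp [Iso.eq_inv_comp, ← reassoc_of% leftDerived_app_comp_leftDerivedIsoHomology_hom]
  · simp [Iso.eq_inv_comp, ← reassoc_of% leftDerived_app_comp_leftDerivedIsoHomology_hom]

lemma exactPair_leftDerived_leftDerivedδ (n : ℕ) (X : C) :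
    ExactPair ((NatTrans.leftDerived T.g (n + 1)).app X) ((leftDerivedδ hT n).app X) := by
  let K := projectiveResolution X
  refine ExactPair.of_iso
    ⟨_, (evalChainComplex_shortExact hT K.complex).homology_exact₃ (n + 1) n rfl⟩
    (leftDerivedIsoHomology K _ _).symm (leftDerivedIsoHomology K _ _).symm
    (leftDerivedIsoHomology K _ _).symm ?_ ?_
  · simp [Iso.eq_inv_comp, ← reassoc_of% leftDerived_app_comp_leftDerivedIsoHomology_hom]
  · simp [K, leftDerivedδ]

lemma exactPair_leftDerivedδ_leftDerived (n : ℕ) (X : C) :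
    ExactPair ((leftDerivedδ hT n).app X) ((NatTrans.leftDerived T.f n).app X) := by
  let K := projectiveResolution X
  refine ExactPair.of_iso
    ⟨_, (evalChainComplex_shortExact hT K.complex).homology_exact₁ (n + 1) n rfl⟩
    (leftDerivedIsoHomology K _ _).symm (leftDerivedIsoHomology K _ _).symm
    (leftDerivedIsoHomology K _ _).symm ?_ ?_
  · simp [K, leftDerivedδ]
  · simp [Iso.eq_inv_comp, ← reassoc_of% leftDerived_app_comp_leftDerivedIsoHomology_hom]

end LeftDerivedSequence

section Ext

variable (R : Type*) [Ring R] {C : Type*} [Category* C] [Abelian C] [Linear R C]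

/-- The complex of functors `Hom(-, S.X₃) ⟶ Hom(-, S.X₂) ⟶ Hom(-, S.X₁)`, with values in the
opposite category so that its left derived functors are the `Ext(-, S.Xᵢ)`. -/
abbrev homShortComplex (S : ShortComplex C) : ShortComplex (C ⥤ (ModuleCat R)ᵒᵖ) where
  X₁ := ((linearYoneda R C).obj S.X₃).rightOp
  X₂ := ((linearYoneda R C).obj S.X₂).rightOp
  X₃ := ((linearYoneda R C).obj S.X₁).rightOp
  f := NatTrans.rightOp ((linearYoneda R C).map S.g)
  g := NatTrans.rightOp ((linearYoneda R C).map S.f)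
  zero := by
    ext X
    refine Quiver.Hom.unop_inj (ModuleCat.hom_ext (LinearMap.ext fun x : X ⟶ S.X₁ ↦ ?_))
    change (x ≫ S.f) ≫ S.g = 0
    simp

variable {R} in
lemma homShortComplex_shortExact {S : ShortComplex C} (hS : S.ShortExact) (X : C) [Projective X] :
    ((homShortComplex R S).map ((evaluation _ _).obj X)).ShortExact := by
  have := hS.mono_f
  have := hS.epi_g
  refine (ShortComplex.ShortExact.mk (S := ((homShortComplex R S).map
    ((evaluation _ _).obj X)).unop) ?_ (mono_f := ?_) (epi_g := ?_)).op
  · rw [ShortComplex.moduleCat_exact_iff]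
    intro (x : X ⟶ S.X₂) (hx : x ≫ S.g = 0)
    exact ⟨hS.exact.lift x hx, hS.exact.lift_f x hx⟩
  · rw [ModuleCat.mono_iff_injective]
    intro (x : X ⟶ S.X₁) (y : X ⟶ S.X₁) (h : x ≫ S.f = y ≫ S.f)
    exact (cancel_mono S.f).1 h
  · rw [ModuleCat.epi_iff_surjective]
    intro (x : X ⟶ S.X₃)
    exact ⟨Projective.factorThru x S.g, Projective.factorThru_comp x S.g⟩

variable [EnoughProjectives C]

lemma isZero_ext_succ_of_injective (n : ℕ) (X Y : C) [Injective Y] :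
    IsZero (((Ext R C (n + 1)).obj (op X)).obj Y) := by
  let K := projectiveResolution X
  refine IsZero.of_iso ?_ (K.isoExt (n + 1) Y)
  rw [← HomologicalComplex.exactAt_iff_isZero_homology,
    HomologicalComplex.exactAt_iff' _ n (n + 1) (n + 2) (by simp) (by simp),
    ShortComplex.moduleCat_exact_iff]
  intro (x : K.complex.X (n + 1) ⟶ Y) (hx : K.complex.d (n + 2) (n + 1) ≫ x = 0)
  exact ⟨(K.exact_succ n).descToInjective x hx, (K.exact_succ n).comp_descToInjective x hx⟩

instance (Y : C) : PreservesFiniteColimits ((linearYoneda R C).obj Y).rightOp := by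
  have : PreservesLimits ((linearYoneda R C).obj Y ⋙ forget (ModuleCat R)) :=
    (inferInstance : PreservesLimits (yoneda.obj Y))
  have : PreservesLimits ((linearYoneda R C).obj Y) :=
    preservesLimits_of_reflects_of_preserves _ (forget (ModuleCat R))
  exact preservesFiniteColimits_rightOp _

variable (C) in
/-- The natural identification of `Hom` with `Ext` in degree zero. -/
noncomputable def linearYonedaIsoExtZero : linearYoneda R C ≅ (Ext R C 0).flip :=
  NatIso.ofComponents
    (fun Y ↦ NatIso.ofComponents
      (fun X ↦ (asIso (((linearYoneda R C).obj Y).rightOp.fromLeftDerivedZero.app X.unop)).unop)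
      (fun f ↦ Quiver.Hom.op_inj
        (((linearYoneda R C).obj Y).rightOp.fromLeftDerivedZero.naturality f.unop).symm))
    (fun f ↦ by
      ext X : 2
      exact Quiver.Hom.op_inj (leftDerived_app_comp_fromLeftDerivedZero
        (NatTrans.rightOp ((linearYoneda R C).map f)) X.unop).symm)

instance {Y Y' : C} (f : Y ⟶ Y') [Mono f] : Mono ((linearYoneda R C).map f) := by
  have (X : Cᵒᵖ) : Mono (((linearYoneda R C).map f).app X) := by
    rw [ModuleCat.mono_iff_injective]
    intro (x : X.unop ⟶ Y) (y : X.unop ⟶ Y) (h : x ≫ f = y ≫ f)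
    exact (cancel_mono f).1 h
  exact NatTrans.mono_of_mono_app _

theorem isRightDerivedFamily_ext : IsRightDerivedFamily fun n ↦ (Ext R C n).flip where
  mono_map S hS := by
    have := hS.mono_f
    rw [← NatIso.naturality_1 (linearYonedaIsoExtZero R C) S.f]
    infer_instance
  exact_map S hS n :=
    .of_app fun X ↦ (exactPair_leftDerived (homShortComplex_shortExact hS) n X.unop).unop
  exists_connecting S hS n := by
    have hT (X : C) [Projective X] := homShortComplex_shortExact (R := R) hS X
    exact ⟨NatTrans.leftOp (leftDerivedδ hT n),
      .of_app fun X ↦ (exactPair_leftDerivedδ_leftDerived hT n X.unop).unop,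
      .of_app fun X ↦ (exactPair_leftDerived_leftDerivedδ hT n X.unop).unop⟩
  isZero_of_injective n E _ :=
    (Functor.isZero_iff _).2 fun X ↦ isZero_ext_succ_of_injective R n X.unop E

end Ext

section LocalCohomology

variable {R : Type u} [CommRing R]

/-- The direct limit of a contravariant functor over the inverse system `⋯ ⟶ R/J² ⟶ R/J ⟶ R/1`. -/
noncomputable abbrev idealPowerColimit (J : Ideal R) :
    ((ModuleCat.{u} R)ᵒᵖ ⥤ ModuleCat.{u} R) ⥤ ModuleCat.{u} R :=
  (Functor.whiskeringLeft _ _ _).obj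
    (localCohomology.ringModIdeals (localCohomology.idealPowersDiagram J)).op ⋙ colim

variable (J : Ideal R)

/-- The interchange of the argument `M` with the colimit in `H^n_J(M) = colim Ext^n(R/J^k, M)`. -/
noncomputable def extFlipCompIdealPowerColimitIso (n : ℕ) :
    (Ext R (ModuleCat.{u} R) n).flip ⋙ idealPowerColimit J ≅ localCohomology J n :=
  (colimitIsoFlipCompColim
    (localCohomology.diagram (localCohomology.idealPowersDiagram J) n)).symm

lemma isRightDerivedFamily_localCohomology : IsRightDerivedFamily (localCohomology J) := by
  have : HasExactColimitsOfShape ℕᵒᵖᵒᵖ (ModuleCat.{u} R) :=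
    (AB5OfSize_of_univLE.{0, 0, u, u} (ModuleCat.{u} R)).ofShape _
  exact ((isRightDerivedFamily_ext R).comp (idealPowerColimit J)).of_iso
    (extFlipCompIdealPowerColimitIso J)

end LocalCohomology

section PrimaryComponent

variable {R : Type*} [CommRing R] {M : Type*} [AddCommGroup M] [Module R M]

open Submodule Ideal

variable (M) in
lemma primaryComponent_add (I J : Ideal R) :
    primaryComponent M (I + J) = primaryComponent M I ⊓ primaryComponent M J := by
  ext x
  rw [Submodule.mem_inf]
  simp only [primaryComponent_mem]
  constructor
  · rintro ⟨n, hn⟩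
    exact ⟨⟨n, torsionBySet_le_torsionBySet_of_subset (pow_right_mono le_sup_left n) hn⟩,
      ⟨n, torsionBySet_le_torsionBySet_of_subset (pow_right_mono le_sup_right n) hn⟩⟩
  · rintro ⟨⟨m, hm⟩, ⟨n, hn⟩⟩
    refine ⟨m + n, torsionBySet_le_torsionBySet_of_subset sup_pow_add_le_pow_sup_pow ?_⟩
    rw [mem_torsionBySet_iff] at *
    rintro ⟨_, ha⟩
    obtain ⟨b, hb, c, hc, rfl⟩ := Submodule.mem_sup.1 ha
    rw [add_smul, hm ⟨b, hb⟩, hn ⟨c, hc⟩, add_zero]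

lemma map_primaryComponent_of_injective {N : Type*} [AddCommGroup N] [Module R N] (J : Ideal R)
    {f : N →ₗ[R] M} (hf : Function.Injective f) :
    (primaryComponent N J).map f = f.range ⊓ primaryComponent M J := by
  have h_mem (x : N) : f x ∈ primaryComponent M J ↔ x ∈ primaryComponent N J := by
    simp only [primaryComponent_mem, mem_torsionBySet_iff, ← map_smul, map_eq_zero_iff f hf]
  rw [← map_comap_eq]
  exact congrArg (map f) (Submodule.ext h_mem).symm

lemma exists_le_torsionBySet_pow_of_le_primaryComponent {I : Ideal R} {N : Submodule R M}
    (hN : N.FG) (h : N ≤ primaryComponent M I) : ∃ n, N ≤ torsionBySet R M ↑(I ^ n) := by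
  have hmono : Monotone fun n ↦ torsionBySet R M ↑(I ^ n) :=
    fun i j hij ↦ torsionBySet_le_torsionBySet_pow i j hij I
  obtain ⟨_, ⟨n, rfl⟩, hn⟩ := (fg_iff_compact N).1 hN _ _ (Set.range_nonempty _)
    hmono.directed_le.directedOn_range isLUB_iSup h
  exact ⟨n, hn⟩

/-- By Artin–Rees, the `I`-adic topology of `L` induces the `I`-adic topology of `N`. -/
lemma exists_pow_smul_top_inf_le_map_ker [IsNoetherianRing R] {L : Type*} [AddCommGroup L]
    [Module R L] [Module.Finite R L] {I : Ideal R} {N : Submodule R L} {f : N →ₗ[R] M} {n : ℕ}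
    (hf : f.range ≤ torsionBySet R M ↑(I ^ n)) : ∃ m, I ^ m • ⊤ ⊓ N ≤ f.ker.map N.subtype := by
  obtain ⟨k, hk⟩ := I.exists_pow_inf_eq_pow_smul N
  refine ⟨n + k, ?_⟩
  calc I ^ (n + k) • ⊤ ⊓ N = I ^ n • (I ^ k • ⊤ ⊓ N) := by rw [hk _ (by lia), Nat.add_sub_cancel]
    _ ≤ I ^ n • N := smul_mono le_rfl inf_le_right
    _ = (I ^ n • (⊤ : Submodule R N)).map N.subtype := by rw [map_smul'', map_subtype_top]
    _ ≤ f.ker.map N.subtype := by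
      refine map_mono (smul_le.2 fun a ha x _ ↦ ?_)
      rw [LinearMap.mem_ker, map_smul]
      exact (mem_torsionBySet_iff _ _).1 (hf (f.mem_range_self x)) ⟨a, ha⟩

end PrimaryComponent

section InjectiveTorsion

open Submodule Ideal

lemma exists_comp_eq_of_ker_le {R : Type*} [Ring R] {A B E : Type u} [AddCommGroup A]
    [AddCommGroup B] [AddCommGroup E] [Module R A] [Module R B] [Module R E] [Module.Injective R E]
    (i : A →ₗ[R] B) (f : A →ₗ[R] E) (h : i.ker ≤ f.ker) : ∃ φ : B →ₗ[R] E, φ ∘ₗ i = f := by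
  obtain ⟨φ, hφ⟩ := Module.Injective.out (i.ker.liftQ i le_rfl)
    (LinearMap.ker_eq_bot.1 (ker_liftQ_eq_bot _ _ _ le_rfl)) (i.ker.liftQ f h)
  exact ⟨φ, LinearMap.ext fun x ↦ hφ (Submodule.Quotient.mk x)⟩

theorem injective_primaryComponent {R : Type u} [CommRing R] [IsNoetherianRing R] (I : Ideal R)
    (E : Type u) [AddCommGroup E] [Module R E] [Module.Injective R E] :
    Module.Injective R (primaryComponent E I) := by
  refine Module.Baer.injective fun 𝔞 g ↦ ?_
  let f : 𝔞 →ₗ[R] E := (primaryComponent E I).subtype ∘ₗ g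
  have hf : f.range ≤ primaryComponent E I := by
    rintro _ ⟨x, rfl⟩
    exact (g x).2
  obtain ⟨n, hn⟩ := exists_le_torsionBySet_pow_of_le_primaryComponent
    (Module.Finite.iff_fg.1 inferInstance) hf
  obtain ⟨m, hm⟩ := exists_pow_smul_top_inf_le_map_ker hn
  have h_ker : ((I ^ m).mkQ ∘ₗ 𝔞.subtype).ker ≤ f.ker := fun x hx ↦ by
    have hx : (x : R) ∈ I ^ m := by simpa [Ideal.Quotient.eq_zero_iff_mem] using hx
    obtain ⟨y, hy, hyx⟩ := hm ⟨by simpa using hx, x.2⟩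
    rwa [← Subtype.ext hyx]
  obtain ⟨φ, hφ⟩ := exists_comp_eq_of_ker_le _ f h_ker
  have hφ_mem (r : R) : φ ((I ^ m).mkQ r) ∈ primaryComponent E I := by
    refine (primaryComponent_mem E I _).2 ⟨m, (mem_torsionBySet_iff _ _).2 fun a ↦ ?_⟩
    rw [← map_smul, ← map_smul, mkQ_apply, (Submodule.Quotient.mk_eq_zero _).2, map_zero]
    exact mul_mem_right r _ a.2
  exact ⟨(φ ∘ₗ (I ^ m).mkQ).codRestrict _ hφ_mem,
    fun x hx ↦ Subtype.ext (LinearMap.congr_fun hφ ⟨x, hx⟩)⟩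

end InjectiveTorsion

section TorsionInclusion

section

variable {R : Type*} [Ring R]

/-- Two monomorphisms into the same module with the same image have isomorphic sources. -/
noncomputable def isoOfRangeEq {A B C : ModuleCat R} (f : A ⟶ C) (g : B ⟶ C) [Mono f] [Mono g]
    (h : f.hom.range = g.hom.range) : A ≅ B :=
  (LinearEquiv.ofInjective f.hom ((ModuleCat.mono_iff_injective f).1 ‹_›) ≪≫ₗ .ofEq _ _ h ≪≫ₗ
    (LinearEquiv.ofInjective g.hom ((ModuleCat.mono_iff_injective g).1 ‹_›)).symm).toModuleIso

lemma isoOfRangeEq_hom_comp {A B C : ModuleCat R} (f : A ⟶ C) (g : B ⟶ C) [Mono f] [Mono g]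
    (h : f.hom.range = g.hom.range) : (isoOfRangeEq f g h).hom ≫ g = f := by
  ext x
  exact congrArg Subtype.val (LinearEquiv.apply_symm_apply
    (LinearEquiv.ofInjective g.hom ((ModuleCat.mono_iff_injective g).1 ‹_›)) _)

/-- The natural version of `isoOfRangeEq`. -/
noncomputable def natIsoOfRangeEq {K : Type*} [Category* K] {F G H : K ⥤ ModuleCat R}
    (α : F ⟶ H) (β : G ⟶ H) [∀ X, Mono (α.app X)] [∀ X, Mono (β.app X)]
    (h : ∀ X, (α.app X).hom.range = (β.app X).hom.range) : F ≅ G :=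
  NatIso.ofComponents (fun X ↦ isoOfRangeEq (α.app X) (β.app X) (h X)) fun {X Y} f ↦ by
    rw [← cancel_mono (β.app Y), Category.assoc, Category.assoc, isoOfRangeEq_hom_comp,
      β.naturality, α.naturality, ← Category.assoc, isoOfRangeEq_hom_comp]

end

variable {R : Type u} [CommRing R] (J : Ideal R)

open Ideal Submodule

/-- The direct system of the modules `Hom(R/J^n, M)`. -/
noncomputable abbrev homSystem (M : ModuleCat.{u} R) : ℕᵒᵖᵒᵖ ⥤ ModuleCat.{u} R :=
  (localCohomology.ringModIdeals (localCohomology.idealPowersDiagram J)).op ⋙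
    (linearYoneda R (ModuleCat.{u} R)).obj M

/-- Evaluation at `1`, as a map `Hom(R/J^n, M) ⟶ M`. -/
noncomputable def evalOne (M : ModuleCat.{u} R) (n : ℕᵒᵖᵒᵖ) : (homSystem J M).obj n ⟶ M :=
  ModuleCat.ofHom
    { toFun := fun φ : ModuleCat.of R (R ⧸ J ^ n.unop.unop) ⟶ M ↦ φ.hom (Submodule.Quotient.mk 1)
      map_add' := fun _ _ ↦ rfl
      map_smul' := fun _ _ ↦ rfl }

lemma evalOne_injective (M : ModuleCat.{u} R) (n : ℕᵒᵖᵒᵖ) :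
    Function.Injective (evalOne J M n) := fun _ _ h ↦
  ModuleCat.hom_ext (Submodule.linearMap_qext _ (LinearMap.ext_ring h))

lemma range_evalOne (M : ModuleCat.{u} R) (n : ℕᵒᵖᵒᵖ) :
    (evalOne J M n).hom.range = torsionBySet R M ↑(J ^ n.unop.unop) := by
  ext x
  rw [mem_torsionBySet_iff]
  constructor
  · rintro ⟨φ : ModuleCat.of R (R ⧸ J ^ n.unop.unop) ⟶ M, rfl⟩ ⟨a, ha⟩
    change a • φ.hom (Submodule.Quotient.mk 1) = 0
    rw [← map_smul, ← Submodule.Quotient.mk_smul, (Submodule.Quotient.mk_eq_zero _).2, map_zero]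
    simpa using ha
  · intro hx
    exact ⟨ModuleCat.ofHom (Submodule.liftQ _ (LinearMap.toSpanSingleton R M x)
      fun a ha ↦ hx ⟨a, ha⟩), one_smul R x⟩

/-- The natural map `colim Hom(R/J^n, M) ⟶ M` induced by the evaluations at `1`. -/
noncomputable def colimitEvalOne :
    linearYoneda R (ModuleCat.{u} R) ⋙ idealPowerColimit J ⟶ 𝟭 (ModuleCat.{u} R) where
  app M := colimit.desc (homSystem J M) ⟨M,
    { app := evalOne J M
      naturality := fun _ _ _ ↦ rfl }⟩
  naturality M N f := colimit.hom_ext fun n ↦ by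
    simp only [Functor.comp_obj, Functor.comp_map, Functor.id_map, Functor.whiskeringLeft_obj_obj,
      Functor.whiskeringLeft_obj_map, colim_obj, colim_map, colimit.map_desc, colimit.ι_desc,
      colimit.ι_desc_assoc]
    rfl

lemma ι_colimitEvalOne_app_apply (M : ModuleCat.{u} R) (n : ℕᵒᵖᵒᵖ) (φ : (homSystem J M).obj n) :
    (colimitEvalOne J).app M (colimit.ι (homSystem J M) n φ) = evalOne J M n φ :=
  ConcreteCategory.congr_hom (colimit.ι_desc _ _) φ

lemma exists_colimitEvalOne_eq (M : ModuleCat.{u} R)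
    (x : (linearYoneda R (ModuleCat.{u} R) ⋙ idealPowerColimit J).obj M) :
    ∃ n φ, colimit.ι (homSystem J M) n φ = x ∧ (colimitEvalOne J).app M x = evalOne J M n φ := by
  have : PreservesFilteredColimitsOfSize.{0, 0} (forget (ModuleCat.{u} R)) :=
    preservesFilteredColimitsOfSize_shrink.{0, u, 0, u} _
  obtain ⟨n, φ, rfl⟩ := Concrete.colimit_exists_rep (homSystem J M) x
  exact ⟨n, φ, rfl, ι_colimitEvalOne_app_apply J M n φ⟩

instance (M : ModuleCat.{u} R) : Mono ((colimitEvalOne J).app M) := by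
  rw [ModuleCat.mono_iff_injective, injective_iff_map_eq_zero]
  intro x hx
  obtain ⟨n, φ, rfl, h⟩ := exists_colimitEvalOne_eq J M x
  obtain rfl : φ = 0 := evalOne_injective J M n (by rw [← h, hx, map_zero])
  exact map_zero _

lemma range_colimitEvalOne_app (M : ModuleCat.{u} R) :
    ((colimitEvalOne J).app M).hom.range = primaryComponent M J := by
  refine Submodule.ext fun x ↦ Iff.trans ?_ (primaryComponent_mem M J x).symm
  constructor
  · rintro ⟨y, rfl⟩
    obtain ⟨n, φ, -, h⟩ := exists_colimitEvalOne_eq J M y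
    exact ⟨n.unop.unop, range_evalOne J M n ▸ ⟨φ, h.symm⟩⟩
  · rintro ⟨n, hn⟩
    obtain ⟨φ, rfl⟩ := (range_evalOne J M (op (op n))).symm ▸ hn
    exact ⟨colimit.ι (homSystem J M) _ φ, ι_colimitEvalOne_app_apply J M _ φ⟩

/-- The natural inclusion `H⁰_J(M) ⟶ M`. -/
noncomputable def localCohomologyZeroι : localCohomology J 0 ⟶ 𝟭 (ModuleCat.{u} R) :=
  (Functor.isoWhiskerRight (linearYonedaIsoExtZero R (ModuleCat.{u} R)) (idealPowerColimit J) ≪≫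
    extFlipCompIdealPowerColimitIso J 0).inv ≫ colimitEvalOne J

instance (M : ModuleCat.{u} R) : Mono ((localCohomologyZeroι J).app M) :=
  mono_comp' (IsSplitMono.mono _) inferInstance

lemma range_localCohomologyZeroι_app (M : ModuleCat.{u} R) :
    ((localCohomologyZeroι J).app M).hom.range = primaryComponent M J := by
  rw [← range_colimitEvalOne_app, localCohomologyZeroι, NatTrans.comp_app, ModuleCat.hom_comp]
  exact LinearMap.range_comp_of_range_eq_top _ (ModuleCat.range_eq_top_of_epi _)

instance injective_localCohomology_zero [IsNoetherianRing R] (E : ModuleCat.{u} R) [Injective E] :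
    Injective ((localCohomology J 0).obj E) := by
  have : Module.Injective R E := Module.injective_module_of_injective_object R E
  have := injective_primaryComponent J E
  have h_inj := Module.injective_object_of_injective_module R (primaryComponent E J)
  have : Mono (ModuleCat.ofHom (primaryComponent E J).subtype) :=
    (ModuleCat.mono_iff_injective _).2 (primaryComponent E J).injective_subtype
  exact Injective.of_iso (isoOfRangeEq (ModuleCat.ofHom (primaryComponent E J).subtype)
    ((localCohomologyZeroι J).app E)
    ((range_subtype _).trans (range_localCohomologyZeroι_app J E).symm)) h_inj

/-- The natural inclusion `H⁰_J(H⁰_I(M)) ⟶ M`. -/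
noncomputable def localCohomologyZeroCompι (I J : Ideal R) :
    localCohomology I 0 ⋙ localCohomology J 0 ⟶ 𝟭 (ModuleCat.{u} R) where
  app M := (localCohomologyZeroι J).app _ ≫ (localCohomologyZeroι I).app M

instance (I J : Ideal R) (M : ModuleCat.{u} R) : Mono ((localCohomologyZeroCompι I J).app M) :=
  mono_comp _ _

lemma range_localCohomologyZeroCompι_app (I J : Ideal R) (M : ModuleCat.{u} R) :
    ((localCohomologyZeroCompι I J).app M).hom.range = primaryComponent M (I + J) := by
  have h_inj := (ModuleCat.mono_iff_injective ((localCohomologyZeroι I).app M)).1 inferInstance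
  calc
    _ = (primaryComponent _ J).map ((localCohomologyZeroι I).app M).hom := by
      rw [← range_localCohomologyZeroι_app]
      exact LinearMap.range_comp _ _
    _ = primaryComponent M I ⊓ primaryComponent M J := by
      rw [← range_localCohomologyZeroι_app I]
      exact map_primaryComponent_of_injective J h_inj
    _ = primaryComponent M (I + J) := (primaryComponent_add M I J).symm

/-- The isomorphism `H⁰_J(H⁰_I(M)) ≅ H⁰_{I+J}(M)`, natural in `M`. -/
noncomputable def localCohomologyZeroCompIso (I J : Ideal R) :
    localCohomology I 0 ⋙ localCohomology J 0 ≅ localCohomology (I + J) 0 :=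
  natIsoOfRangeEq (localCohomologyZeroCompι I J) (localCohomologyZeroι (I + J)) fun M ↦
    (range_localCohomologyZeroCompι_app I J M).trans (range_localCohomologyZeroι_app _ M).symm

end TorsionInclusion

section SerreClass

variable {R : Type u} [CommRing R]

lemma isZero_localCohomology_of_cohomologicalDimension_lt {I : Ideal R} {M : ModuleCat.{u} R}
    {n : ℕ} (h : cohomologicalDimension I M < n) : IsZero ((localCohomology I n).obj M) := by
  by_contra h_nonzero
  refine h.not_ge (le_sSup ⟨n, rfl, not_subsingleton_iff_nontrivial.1 fun _ ↦ h_nonzero ?_⟩)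
  exact ModuleCat.isZero_of_subsingleton _

theorem prop_localCohomology_add [IsNoetherianRing R] (P : ObjectProperty (ModuleCat.{u} R))
    [P.IsSerreClass] (I J : Ideal R) (n : ℕ) (M : ModuleCat.{u} R)
    (hM : ∀ p q, p + q = n → P ((localCohomology J p).obj ((localCohomology I q).obj M))) :
    P ((localCohomology (I + J) n).obj M) :=
  (isRightDerivedFamily_localCohomology I).prop_of_comp
    (isRightDerivedFamily_localCohomology J).toHasLongExactSequences
    (isRightDerivedFamily_localCohomology (I + J))
    (fun p _ _ ↦ (isRightDerivedFamily_localCohomology J).isZero_of_injective p _)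
    (localCohomologyZeroCompIso I J) n M hM

lemma isSerreClass_of_injective_surjective {R : Type*} [Ring R] {P : ObjectProperty (ModuleCat R)}
    [P.Nonempty]
    (hsub : ∀ (A B : ModuleCat R) (f : A ⟶ B), Function.Injective f → P B → P A)
    (hquot : ∀ (A B : ModuleCat R) (f : A ⟶ B), Function.Surjective f → P A → P B)
    (hext : ∀ (A B C : ModuleCat R) (f : A ⟶ B) (g : B ⟶ C),
      Function.Injective f → Function.Surjective g → Function.Exact f g → P A → P C → P B) :
    P.IsSerreClass where
  exists_zero := by
    obtain ⟨A, hA⟩ := P.exists_prop_of_nonempty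
    exact ⟨ModuleCat.of R PUnit, ModuleCat.isZero_of_subsingleton _,
      hsub _ A 0 (Function.injective_of_subsingleton _) hA⟩
  prop_of_mono f _ := hsub _ _ f ((ModuleCat.mono_iff_injective f).1 ‹_›)
  prop_of_epi f _ := hquot _ _ f ((ModuleCat.epi_iff_surjective f).1 ‹_›)
  prop_X₂_of_shortExact hS := hext _ _ _ _ _ hS.injective_f hS.surjective_g
    ((ShortComplex.ShortExact.moduleCat_exact_iff_function_exact _).1 hS.exact)

end SerreClass

/-- let `S` be a Serre subcategory of the category of `R`-modules (a class of
modules closed under submodules, quotients and extensions).  If `c = cd(I,M)`,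
`H^{t+i}_J(H^{c-i}_I(M)) ∈ S` for all `0 < i ≤ c`, and `H^{t+c}_{I+J}(M) ∉ S` for a positive
integer `t`, then `H^t_J(H^c_I(M)) ∉ S`. -/
theorem top_localCohomology_not_mem_serre_class
    (R : Type u) [CommRing R] [IsNoetherianRing R] (M : ModuleCat.{u} R)
    (S : ModuleCat.{u} R → Prop)
    (hsub : ∀ (A B : ModuleCat.{u} R) (f : A ⟶ B), Function.Injective f → S B → S A)
    (hquot : ∀ (A B : ModuleCat.{u} R) (f : A ⟶ B), Function.Surjective f → S A → S B)
    (hext : ∀ (A B C : ModuleCat.{u} R) (f : A ⟶ B) (g : B ⟶ C),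
      Function.Injective f → Function.Surjective g → Function.Exact f g →
        S A → S C → S B)
    (I J : Ideal R) (c : ℕ) (hc : cohomologicalDimension I M = (c : ℕ∞))
    (t : ℕ) (ht : 0 < t)
    (hmem : ∀ i, 0 < i → i ≤ c →
      S ((localCohomology J (t + i)).obj ((localCohomology I (c - i)).obj M)))
    (hnmem : ¬ S ((localCohomology (I + J) (t + c)).obj M)) :
    ¬ S ((localCohomology J t).obj ((localCohomology I c).obj M)) := by
  intro hS
  let P : ObjectProperty (ModuleCat.{u} R) := S
  have : P.Nonempty := ⟨_, hS⟩
  have : P.IsSerreClass := isSerreClass_of_injective_surjective hsub hquot hext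
  refine hnmem (prop_localCohomology_add P I J (t + c) M fun p q hpq ↦ ?_)
  rcases lt_trichotomy q c with hq | rfl | hq
  · have h := hmem (c - q) (by lia) (by lia)
    rwa [show t + (c - q) = p by lia, Nat.sub_sub_self hq.le] at h
  · rwa [show p = t by lia]
  · refine P.prop_of_isZero ?_
    exact (isRightDerivedFamily_localCohomology J).isZero_obj p
      (isZero_localCohomology_of_cohomologicalDimension_lt (hc.trans_lt (Nat.cast_lt.2 hq)))
end

section
/- Let (R, m) be a commutative Noetherian local ring and M an R-module of Krull dimension n with H^n_m(M) ≠ 0, and let I be an ideal of R with dim(R/(I + Ann M)) = d, where Ann M is the annihilator of M. If the top local cohomology module H^{cd(I,M)}_I(M) is Artinian, then either cd(I,M) = n, or there exists an integer i with n − d ≤ i < cd(I,M) such that H^{n−i}_m(H^i_I(M)) ≠ 0. -/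
universe u

open CategoryTheory

open Abelian Opposite

/-!
The argument is a weak form of the Grothendieck spectral sequence
`H^p_m(H^q_I(M)) ⇒ H^{p+q}_m(M)`: if every `H^p_m(H^q_I(M))` with `p + q = n` vanishes, so does
`H^n_m(M)`. This follows by dimension shifting, splitting off `Γ_I(M)` and embedding `M ⧸ Γ_I(M)`
into an injective module without `I`-torsion. Hence `H^n_m(M) ≠ 0` gives a nonzero
`H^{n-i}_m(H^i_I(M))`, where `i ≤ cd(I, M)`. As `H^i_I(M)` is `(I + Ann M)`-power torsion, its
local cohomology vanishes in degrees above `d`, so `n - d ≤ i`. If `i = cd(I, M)`, then `H^i_I(M)`,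
being Artinian, is `m`-power torsion, so only its `H^0_m` is nonzero and `n = i`.
-/

section Torsion

variable {R : Type*} [CommRing R] {I J : Ideal R} {A B : Type*} [AddCommGroup A] [Module R A]
  [AddCommGroup B] [Module R B]

theorem mem_primaryComponent_iff {a : A} :
    a ∈ I.primaryComponent A ↔ ∃ k, ∀ r ∈ I ^ k, r • a = 0 := by
  simp [Ideal.primaryComponent_mem]

/-- `A` is `I`-power torsion, i.e. `Γ_I(A) = A`; Mathlib writes `I.primaryComponent A` for
`Γ_I(A)`. -/
def IsPowerTorsion (I : Ideal R) (A : Type*) [AddCommGroup A] [Module R A] : Prop :=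
  ∀ a : A, a ∈ I.primaryComponent A

theorem primaryComponent_anti (h : I ≤ J) : J.primaryComponent A ≤ I.primaryComponent A := by
  intro a ha
  obtain ⟨k, hk⟩ := mem_primaryComponent_iff.1 ha
  exact mem_primaryComponent_iff.2 ⟨k, fun r hr ↦ hk r (Ideal.pow_right_mono h k hr)⟩

theorem map_mem_primaryComponent (f : A →ₗ[R] B) {a : A} (ha : a ∈ I.primaryComponent A) :
    f a ∈ I.primaryComponent B :=
  I.primaryComponent_map_mem f ⟨a, ha⟩

theorem map_mem_primaryComponent_iff {f : A →ₗ[R] B} (hf : Function.Injective f) {a : A} :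
    f a ∈ I.primaryComponent B ↔ a ∈ I.primaryComponent A := by
  simp only [mem_primaryComponent_iff, ← map_smul, map_eq_zero_iff f hf]

theorem mem_primaryComponent_span_singleton {x : R} {a : A} :
    a ∈ (Ideal.span {x}).primaryComponent A ↔ ∃ k : ℕ, x ^ k • a = 0 := by
  simp only [mem_primaryComponent_iff, Ideal.span_singleton_pow, Ideal.mem_span_singleton']
  refine exists_congr fun k ↦ ⟨fun h ↦ h _ ⟨1, one_mul _⟩, ?_⟩
  rintro h _ ⟨s, rfl⟩
  rw [mul_smul, h, smul_zero]

theorem isPowerTorsion_of_le_annihilator (h : I ≤ Module.annihilator R A) : IsPowerTorsion I A :=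
  fun a ↦ mem_primaryComponent_iff.2
    ⟨1, fun _ hr ↦ Module.mem_annihilator.1 (h (pow_one I ▸ hr)) a⟩

theorem isPowerTorsion_primaryComponent : IsPowerTorsion I (I.primaryComponent A) := fun a ↦
  (map_mem_primaryComponent_iff (I.primaryComponent A).injective_subtype).1 a.2

namespace IsPowerTorsion

theorem of_injective (hB : IsPowerTorsion I B) {f : A →ₗ[R] B} (hf : Function.Injective f) :
    IsPowerTorsion I A :=
  fun a ↦ (map_mem_primaryComponent_iff hf).1 (hB (f a))

theorem of_surjective (hA : IsPowerTorsion I A) {f : A →ₗ[R] B} (hf : Function.Surjective f) :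
    IsPowerTorsion I B :=
  hf.forall.2 fun a ↦ map_mem_primaryComponent f (hA a)

theorem sup (hI : IsPowerTorsion I A) (hJ : IsPowerTorsion J A) : IsPowerTorsion (I ⊔ J) A := by
  intro a
  obtain ⟨k, hk⟩ := mem_primaryComponent_iff.1 (hI a)
  obtain ⟨l, hl⟩ := mem_primaryComponent_iff.1 (hJ a)
  refine mem_primaryComponent_iff.2 ⟨k + l, fun r hr ↦ ?_⟩
  obtain ⟨x, hx, y, hy, rfl⟩ := Submodule.mem_sup.1 (Ideal.sup_pow_add_le_pow_sup_pow hr)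
  rw [add_smul, hk x hx, hl y hy, add_zero]

theorem of_pow_le {n : ℕ} (hA : IsPowerTorsion J A) (h : I ^ n ≤ J) : IsPowerTorsion I A := by
  intro a
  obtain ⟨k, hk⟩ := mem_primaryComponent_iff.1 (hA a)
  exact mem_primaryComponent_iff.2 ⟨n * k, fun r hr ↦
    hk r (Ideal.pow_right_mono h k (pow_mul I n k ▸ hr))⟩

theorem of_le_radical [IsNoetherianRing R] (hA : IsPowerTorsion J A) (h : I ≤ J.radical) :
    IsPowerTorsion I A :=
  have ⟨_, hn⟩ := Ideal.exists_pow_le_of_le_radical_of_fg h (IsNoetherian.noetherian I)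
  hA.of_pow_le hn

theorem exists_pow_le_annihilator [Module.Finite R A] (hA : IsPowerTorsion I A) :
    ∃ k, I ^ k ≤ Module.annihilator R A := by
  obtain ⟨s, hs⟩ := (Module.Finite.fg_top : (⊤ : Submodule R A).FG)
  choose k hk using fun a ↦ mem_primaryComponent_iff.1 (hA a)
  refine ⟨s.sup k, fun r hr ↦ Module.mem_annihilator.2 fun a ↦ ?_⟩
  have hspan : Submodule.span R s ≤ LinearMap.ker (LinearMap.lsmul R A r) :=
    Submodule.span_le.2 fun a ha ↦ hk a r (Ideal.pow_le_pow_right (Finset.le_sup ha) hr)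
  exact hspan (hs ▸ Submodule.mem_top)

theorem exists_comap_pow_smul_top_le_ker [IsNoetherianRing R] {P : Type*} [AddCommGroup P]
    [Module R P] [Module.Finite R P] {N : Submodule R P} (hB : IsPowerTorsion I B)
    (g : N →ₗ[R] B) :
    ∃ n, (I ^ n • ⊤ : Submodule R P).comap N.subtype ≤ LinearMap.ker g := by
  obtain ⟨k, hk⟩ :=
    (hB.of_injective (LinearMap.range g).injective_subtype).exists_pow_le_annihilator
  obtain ⟨l, hl⟩ := Ideal.exists_pow_inf_eq_pow_smul I N
  refine ⟨k + l, fun x hx ↦ ?_⟩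
  have hx' : (x : P) ∈ I ^ k • N := by
    have hmem : (x : P) ∈ I ^ (k + l) • ⊤ ⊓ N := ⟨hx, x.2⟩
    rw [hl _ (Nat.le_add_left l k), Nat.add_sub_cancel] at hmem
    exact Submodule.smul_mono le_rfl inf_le_right hmem
  have hker : I ^ k • N ≤ (LinearMap.ker g).map N.subtype := by
    refine Submodule.smul_le.2 fun r hr y hy ↦ ⟨r • ⟨y, hy⟩, ?_, rfl⟩
    have hry := Module.mem_annihilator.1 (hk hr) ⟨g ⟨y, hy⟩, LinearMap.mem_range_self g _⟩
    exact (map_smul g _ _).trans (congrArg Subtype.val hry)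
  obtain ⟨y, hy, hyx⟩ := hker hx'
  rwa [← Subtype.ext hyx]

end IsPowerTorsion

theorem primaryComponent_quotient_primaryComponent [IsNoetherianRing R] :
    I.primaryComponent (A ⧸ I.primaryComponent A) = ⊥ := by
  refine (Submodule.eq_bot_iff _).2 fun a ha ↦ ?_
  obtain ⟨a, rfl⟩ := (I.primaryComponent A).mkQ_surjective a
  obtain ⟨k, hk⟩ := mem_primaryComponent_iff.1 ha
  have hle : Submodule.map (LinearMap.toSpanSingleton R A a) (I ^ k) ≤ I.primaryComponent A := by
    rintro _ ⟨r, hr, rfl⟩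
    exact (Submodule.Quotient.mk_eq_zero _).1 (hk r hr)
  obtain ⟨l, hl⟩ := (isPowerTorsion_primaryComponent.of_injective
    (Submodule.inclusion_injective hle)).exists_pow_le_annihilator
  refine (Submodule.Quotient.mk_eq_zero _).2 (mem_primaryComponent_iff.2 ⟨l + k, fun r hr ↦ ?_⟩)
  have hann : I ^ (l + k) ≤ LinearMap.ker (LinearMap.toSpanSingleton R A a) := by
    rw [pow_add]
    refine Ideal.mul_le.2 fun x hx y hy ↦ ?_
    rw [LinearMap.mem_ker, LinearMap.toSpanSingleton_apply, mul_smul]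
    exact congrArg Subtype.val
      (Module.mem_annihilator.1 (hl hx) ⟨y • a, y, hy, rfl⟩)
  exact hann hr

end Torsion

section Injective

variable {R : Type u} [CommRing R] {A B E : Type u} [AddCommGroup A] [Module R A]
  [AddCommGroup B] [Module R B] [AddCommGroup E] [Module R E]

theorem exists_comp_eq_of_ker_le_ker [hE : Module.Injective R E] (f : A →ₗ[R] B) (g : A →ₗ[R] E)
    (h : LinearMap.ker f ≤ LinearMap.ker g) : ∃ g' : B →ₗ[R] E, g' ∘ₗ f = g := by
  obtain ⟨g', hg'⟩ := hE.out ((LinearMap.ker f).liftQ f le_rfl)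
    (LinearMap.ker_eq_bot.1 (Submodule.ker_liftQ_eq_bot' _ _ rfl)) ((LinearMap.ker f).liftQ g h)
  exact ⟨g', LinearMap.ext fun a ↦ hg' (Submodule.Quotient.mk a)⟩

theorem injective_primaryComponent_s15 [IsNoetherianRing R] [Module.Injective R E] (I : Ideal R) :
    Module.Injective R (I.primaryComponent E) := by
  refine Module.Baer.injective fun L g ↦ ?_
  obtain ⟨n, hn⟩ := isPowerTorsion_primaryComponent.exists_comap_pow_smul_top_le_ker g
  obtain ⟨g', hg'⟩ := exists_comp_eq_of_ker_le_ker ((I ^ n).mkQ ∘ₗ L.subtype)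
    ((I.primaryComponent E).subtype ∘ₗ g) (by simpa [LinearMap.ker_comp] using hn)
  have hquot : IsPowerTorsion I (R ⧸ I ^ n) :=
    (isPowerTorsion_of_le_annihilator (Ideal.annihilator_quotient (I := I ^ n)).ge).of_pow_le le_rfl
  exact ⟨(g' ∘ₗ (I ^ n).mkQ).codRestrict _ fun r ↦ map_mem_primaryComponent g' (hquot _),
    fun x hx ↦ Subtype.ext (LinearMap.congr_fun hg' ⟨x, hx⟩)⟩

/- The annihilators of the powers of `x` in `R` stabilise, say at `x ^ r`; then
`x ^ (r + 1) ↦ x ^ r • e` is a well-defined map on the ideal `(x ^ (r + 1))`, and it extends to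
`R`. -/
theorem exists_sub_smul_mem_primaryComponent_span_singleton [IsNoetherianRing R]
    [Module.Injective R E] (x : R) (e : E) :
    ∃ b : E, e - x • b ∈ (Ideal.span {x}).primaryComponent E := by
  obtain ⟨r, hr⟩ := monotone_stabilizes_iff_noetherian.2 ‹IsNoetherianRing R›
    (LinearMap.mulLeft R x).iterateKer
  have hker : LinearMap.ker (LinearMap.mulLeft R (x ^ (r + 1))) ≤
      LinearMap.ker (LinearMap.toSpanSingleton R E (x ^ r • e)) := fun y hy ↦ by
    have hy' : y ∈ (LinearMap.mulLeft R x).iterateKer r := by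
      rw [hr (r + 1) (Nat.le_succ r)]
      simpa [LinearMap.iterateKer, LinearMap.pow_mulLeft] using hy
    have hxy : x ^ r * y = 0 := by simpa [LinearMap.iterateKer, LinearMap.pow_mulLeft] using hy'
    rw [LinearMap.mem_ker, LinearMap.toSpanSingleton_apply, smul_smul, mul_comm, hxy, zero_smul]
  obtain ⟨g, hg⟩ := exists_comp_eq_of_ker_le_ker _ _ hker
  refine ⟨g 1, mem_primaryComponent_span_singleton.2 ⟨r, ?_⟩⟩
  have hg1 : g (x ^ (r + 1)) = x ^ r • e := by simpa using LinearMap.congr_fun hg 1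
  rw [smul_sub, smul_smul, ← pow_succ, ← map_smul, smul_eq_mul, mul_one, hg1, sub_self]

end Injective

section DirectLimit

variable {R ι : Type*} [CommRing R] [Preorder ι] [DecidableEq ι] [IsDirectedOrder ι] [Nonempty ι]

theorem directLimit_map_exact {G G' G'' : ι → Type*} [∀ i, AddCommGroup (G i)]
    [∀ i, Module R (G i)] [∀ i, AddCommGroup (G' i)] [∀ i, Module R (G' i)]
    [∀ i, AddCommGroup (G'' i)] [∀ i, Module R (G'' i)]
    {f : ∀ i j, i ≤ j → G i →ₗ[R] G j} {f' : ∀ i j, i ≤ j → G' i →ₗ[R] G' j}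
    {f'' : ∀ i j, i ≤ j → G'' i →ₗ[R] G'' j} [DirectedSystem G'' (f'' · · ·)]
    (g : ∀ i, G i →ₗ[R] G' i) (hg : ∀ i j h, g j ∘ₗ f i j h = f' i j h ∘ₗ g i)
    (g' : ∀ i, G' i →ₗ[R] G'' i) (hg' : ∀ i j h, g' j ∘ₗ f' i j h = f'' i j h ∘ₗ g' i)
    (hex : ∀ i, Function.Exact (g i) (g' i)) :
    Function.Exact (Module.DirectLimit.map g hg) (Module.DirectLimit.map g' hg') := by
  intro y
  constructor
  · intro hy
    obtain ⟨i, y, rfl⟩ := Module.DirectLimit.exists_of y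
    rw [Module.DirectLimit.map_apply_of] at hy
    obtain ⟨j, hij, hj⟩ := Module.DirectLimit.of.zero_exact hy
    obtain ⟨x, hx⟩ := (hex j (f' i j hij y)).1 ((LinearMap.congr_fun (hg' i j hij) y).trans hj)
    refine ⟨Module.DirectLimit.of R ι G f j x, ?_⟩
    rw [Module.DirectLimit.map_apply_of, hx, Module.DirectLimit.of_f]
  · rintro ⟨x, rfl⟩
    obtain ⟨i, x, rfl⟩ := Module.DirectLimit.exists_of x
    rw [Module.DirectLimit.map_apply_of, Module.DirectLimit.map_apply_of,
      (hex i).apply_apply_eq_zero, map_zero]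

end DirectLimit

section DirectLimitExt

variable {R : Type u} [CommRing R] (I : Ideal R) {L M N : ModuleCat.{u} R}

/-- The inverse system `t ↦ R ⧸ I ^ t` occurring in `localCohomology`. -/
noncomputable abbrev quotientPowers : ℕᵒᵖ ⥤ ModuleCat.{u} R :=
  localCohomology.ringModIdeals (localCohomology.idealPowersDiagram I)

/-- The transition maps of the direct system `t ↦ Ext^i(R ⧸ I ^ t, M)`. -/
noncomputable abbrev extTransition (i : ℕ) (M : ModuleCat.{u} R) (s t : ℕ) (h : s ≤ t) :
    Ext ((quotientPowers I).obj (op s)) M i →ₗ[R] Ext ((quotientPowers I).obj (op t)) M i :=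
  (Ext.mk₀ ((quotientPowers I).map (homOfLE h).op)).precompOfLinear R M (zero_add i)

instance directedSystem_extTransition (i : ℕ) (M : ModuleCat.{u} R) :
    DirectedSystem (fun t ↦ Ext ((quotientPowers I).obj (op t)) M i)
      (fun s t h ↦ extTransition I i M s t h) where
  map_self t x := by
    change (Ext.mk₀ ((quotientPowers I).map (𝟙 (op t)))).comp x (zero_add i) = x
    rw [CategoryTheory.Functor.map_id, Ext.mk₀_id_comp]
  map_map s t v hst htv x := by
    change (Ext.mk₀ ((quotientPowers I).map (homOfLE htv).op)).comp
        ((Ext.mk₀ ((quotientPowers I).map (homOfLE hst).op)).comp x (zero_add i)) (zero_add i) =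
      (Ext.mk₀ ((quotientPowers I).map ((homOfLE htv).op ≫ (homOfLE hst).op))).comp x (zero_add i)
    rw [CategoryTheory.Functor.map_comp, ← Ext.mk₀_comp_mk₀_assoc]

theorem postcomp_comp_extTransition {i k n : ℕ} (α : Ext M N n) (h : i + n = k) (s t : ℕ)
    (hst : s ≤ t) :
    α.postcompOfLinear R _ h ∘ₗ extTransition I i M s t hst =
      extTransition I k N s t hst ∘ₗ α.postcompOfLinear R _ h := by
  ext x
  exact Ext.comp_assoc _ x α (zero_add i) h (by lia)

/-- The direct limit over `t` of the postcompositions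
`Ext^i(R ⧸ I ^ t, M) → Ext^k(R ⧸ I ^ t, N)` with a class `α ∈ Ext^n(M, N)`. -/
noncomputable def directLimitPostcomp {i k n : ℕ} (α : Ext M N n) (h : i + n = k) :
    Module.DirectLimit _ (extTransition I i M) →ₗ[R]
      Module.DirectLimit _ (extTransition I k N) :=
  Module.DirectLimit.map (fun _ ↦ α.postcompOfLinear R _ h) (postcomp_comp_extTransition I α h)

theorem directLimitPostcomp_of {i k n : ℕ} (α : Ext M N n) (h : i + n = k) (t : ℕ)
    (x : Ext ((quotientPowers I).obj (op t)) M i) :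
    directLimitPostcomp I α h (Module.DirectLimit.of R ℕ _ (extTransition I i M) t x) =
      Module.DirectLimit.of R ℕ _ (extTransition I k N) t (x.comp α h) :=
  Module.DirectLimit.map_apply_of ..

theorem directLimitPostcomp_exact {i j k m n : ℕ} (α : Ext L M m) (β : Ext M N n)
    (hα : i + m = j) (hβ : j + n = k)
    (hex : ∀ X, Function.Exact (α.postcomp X hα) (β.postcomp X hβ)) :
    Function.Exact (directLimitPostcomp I α hα) (directLimitPostcomp I β hβ) :=
  directLimit_map_exact _ (postcomp_comp_extTransition I α hα) _
    (postcomp_comp_extTransition I β hβ) fun _ ↦ hex _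

/-- The functor `M ↦ colim_t Ext^i(R ⧸ I ^ t, M)`, built on `Abelian.Ext`, for which Mathlib has
the long exact sequence in the second variable. It is isomorphic to `localCohomology I i`, built
on the left derived `Ext`; see `localCohomologyEquiv`. -/
noncomputable def directLimitExt (i : ℕ) : ModuleCat.{u} R ⥤ ModuleCat.{u} R where
  obj M := ModuleCat.of R (Module.DirectLimit _ (extTransition I i M))
  map f := ModuleCat.ofHom (directLimitPostcomp I (Ext.mk₀ f) (add_zero i))
  map_id M := by
    ext t x
    exact (directLimitPostcomp_of ..).trans (congrArg _ (Ext.comp_mk₀_id x))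
  map_comp f g := by
    ext t x
    simp [directLimitPostcomp_of]

namespace directLimitExt

/-- The inclusion of the `t`-th term of the direct system defining `directLimitExt`. -/
noncomputable def of (i t : ℕ) (M : ModuleCat.{u} R) :
    Ext ((quotientPowers I).obj (op t)) M i →ₗ[R] (directLimitExt I i).obj M :=
  Module.DirectLimit.of R ℕ _ (extTransition I i M) t

variable {I}

theorem exists_of {i : ℕ} (x : (directLimitExt I i).obj M) : ∃ t y, of I i t M y = x :=
  Module.DirectLimit.exists_of x

theorem map_of (f : M ⟶ N) (i t : ℕ) (x : Ext ((quotientPowers I).obj (op t)) M i) :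
    (directLimitExt I i).map f (of I i t M x) = of I i t N (x.comp (Ext.mk₀ f) (add_zero i)) :=
  directLimitPostcomp_of ..

theorem subsingleton_obj_congr (e : M ≃ₗ[R] N) (i : ℕ) :
    Subsingleton ((directLimitExt I i).obj M) ↔ Subsingleton ((directLimitExt I i).obj N) :=
  ((directLimitExt I i).mapIso e.toModuleIso).toLinearEquiv.subsingleton_congr

theorem map_smul_id (r : R) (i : ℕ) (x : (directLimitExt I i).obj M) :
    (directLimitExt I i).map (r • 𝟙 M) x = r • x := by
  obtain ⟨t, x, rfl⟩ := exists_of x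
  rw [map_of, Ext.mk₀_smul, Ext.comp_smul, Ext.comp_mk₀_id, map_smul]

section LongExactSequence

variable {S : ShortComplex (ModuleCat.{u} R)}

/-- The connecting homomorphism of the long exact sequence of `directLimitExt`. -/
noncomputable def δ (hS : S.ShortExact) (i : ℕ) :
    (directLimitExt I i).obj S.X₃ ⟶ (directLimitExt I (i + 1)).obj S.X₁ :=
  ModuleCat.ofHom (directLimitPostcomp I hS.extClass rfl)

theorem exact_map_map (hS : S.ShortExact) (i : ℕ) :
    Function.Exact ((directLimitExt I i).map S.f) ((directLimitExt I i).map S.g) :=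
  directLimitPostcomp_exact I _ _ _ _ fun X ↦ (ShortComplex.ab_exact_iff_function_exact _).1
    (Ext.covariant_sequence_exact₂' X hS i)

theorem exact_map_δ (hS : S.ShortExact) (i : ℕ) :
    Function.Exact ((directLimitExt I i).map S.g) (δ (I := I) hS i) :=
  directLimitPostcomp_exact I _ _ _ _ fun X ↦ (ShortComplex.ab_exact_iff_function_exact _).1
    (Ext.covariant_sequence_exact₃' X hS i (i + 1) rfl)

theorem exact_δ_map (hS : S.ShortExact) (i : ℕ) :
    Function.Exact (δ (I := I) hS i) ((directLimitExt I (i + 1)).map S.f) :=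
  directLimitPostcomp_exact I _ _ _ _ fun X ↦ (ShortComplex.ab_exact_iff_function_exact _).1
    (Ext.covariant_sequence_exact₁' X hS i (i + 1) rfl)

end LongExactSequence

end directLimitExt

/-- The residue class of `1` in `R ⧸ I ^ t`. -/
def quotientPowersOne (t : ℕ) : (quotientPowers I).obj (op t) := (1 : R ⧸ I ^ t)

variable {I} in
theorem smul_quotientPowers_eq_zero {t : ℕ} {r : R} (hr : r ∈ I ^ t)
    (y : (quotientPowers I).obj (op t)) : r • y = 0 :=
  Module.mem_annihilator.1 (Ideal.annihilator_quotient (I := I ^ t) ▸ hr) (y : R ⧸ I ^ t)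

variable {I} in
theorem quotientPowers_hom_ext {t : ℕ} {f g : (quotientPowers I).obj (op t) ⟶ M}
    (h : f (quotientPowersOne I t) = g (quotientPowersOne I t)) : f = g :=
  ModuleCat.hom_ext (Submodule.linearMap_qext (I ^ t) (LinearMap.ext_ring h))

/-- Evaluation at `1` of the homomorphisms `R ⧸ I ^ t → M`. -/
noncomputable def extZeroEval (t : ℕ) (M : ModuleCat.{u} R) :
    Ext ((quotientPowers I).obj (op t)) M 0 →ₗ[R] M :=
  LinearMap.applyₗ (R := R) (quotientPowersOne I t) ∘ₗ
    (ModuleCat.homLinearEquiv (S := R)).toLinearMap ∘ₗ (Ext.linearEquiv₀ (R := R)).toLinearMap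

theorem extZeroEval_mk₀ (t : ℕ) (f : (quotientPowers I).obj (op t) ⟶ M) :
    extZeroEval I t M (Ext.mk₀ f) = f (quotientPowersOne I t) := by
  have hf : Ext.linearEquiv₀ (R := R) (Ext.mk₀ f) = f := by
    rw [← Ext.linearEquiv₀_symm_apply (R := R), LinearEquiv.apply_symm_apply]
  exact congrArg (fun f : (quotientPowers I).obj (op t) ⟶ M ↦ f (quotientPowersOne I t)) hf

theorem extZeroEval_extTransition (s t : ℕ) (h : s ≤ t)
    (x : Ext ((quotientPowers I).obj (op s)) M 0) :
    extZeroEval I t M (extTransition I 0 M s t h x) = extZeroEval I s M x := by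
  obtain ⟨f, rfl⟩ := (Ext.mk₀_bijective _ _).2 x
  exact (congrArg _ (Ext.mk₀_comp_mk₀ _ f)).trans
    ((extZeroEval_mk₀ I t _).trans (extZeroEval_mk₀ I s f).symm)

namespace directLimitExt

/-- The map `colim_t Hom(R ⧸ I ^ t, M) → M` evaluating homomorphisms at `1`. -/
noncomputable def eval (M : ModuleCat.{u} R) : (directLimitExt I 0).obj M →ₗ[R] M :=
  Module.DirectLimit.lift _ _ _ _ (extZeroEval I · M) (extZeroEval_extTransition I)

theorem eval_of_mk₀ (t : ℕ) (f : (quotientPowers I).obj (op t) ⟶ M) :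
    eval I M (of I 0 t M (Ext.mk₀ f)) = f (quotientPowersOne I t) :=
  (Module.DirectLimit.lift_of _ (extZeroEval_extTransition I) _).trans (extZeroEval_mk₀ I t f)

variable {I}

theorem exists_of_mk₀ (x : (directLimitExt I 0).obj M) :
    ∃ (t : ℕ) (f : (quotientPowers I).obj (op t) ⟶ M), of I 0 t M (Ext.mk₀ f) = x := by
  obtain ⟨t, x, rfl⟩ := exists_of x
  obtain ⟨f, rfl⟩ := (Ext.mk₀_bijective _ _).2 x
  exact ⟨t, f, rfl⟩

theorem eval_map (f : M ⟶ N) (x : (directLimitExt I 0).obj M) :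
    eval I N ((directLimitExt I 0).map f x) = f (eval I M x) := by
  obtain ⟨t, g, rfl⟩ := exists_of_mk₀ x
  rw [map_of, Ext.mk₀_comp_mk₀, eval_of_mk₀, eval_of_mk₀, ModuleCat.comp_apply]

theorem eval_injective (M : ModuleCat.{u} R) : Function.Injective (eval I M) := by
  refine (injective_iff_map_eq_zero _).2 fun x hx ↦ ?_
  obtain ⟨t, f, rfl⟩ := exists_of_mk₀ x
  rw [eval_of_mk₀] at hx
  have hf : f = 0 := quotientPowers_hom_ext hx
  rw [hf, Ext.mk₀_zero, map_zero]

theorem range_eval (M : ModuleCat.{u} R) :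
    LinearMap.range (eval I M) = I.primaryComponent M := by
  ext a
  rw [mem_primaryComponent_iff]
  constructor
  · rintro ⟨x, rfl⟩
    obtain ⟨t, f, rfl⟩ := exists_of_mk₀ x
    refine ⟨t, fun r hr ↦ ?_⟩
    rw [eval_of_mk₀, ← map_smul, smul_quotientPowers_eq_zero hr, map_zero]
  · rintro ⟨t, ht⟩
    exact ⟨of I 0 t M (Ext.mk₀ (ModuleCat.ofHom
      ((I ^ t).liftQ (LinearMap.toSpanSingleton R M a) ht))),
      (eval_of_mk₀ ..).trans (one_smul R a)⟩

/-- The isomorphism `H^0_I(M) ≅ Γ_I(M)`. -/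
noncomputable def zeroEquiv (M : ModuleCat.{u} R) :
    (directLimitExt I 0).obj M ≃ₗ[R] I.primaryComponent M :=
  (LinearEquiv.ofInjective _ (eval_injective M)).trans (LinearEquiv.ofEq _ _ (range_eval M))

theorem subsingleton_zero (hM : I.primaryComponent M = ⊥) :
    Subsingleton ((directLimitExt I 0).obj M) :=
  (zeroEquiv M).subsingleton_congr.2 (Submodule.subsingleton_iff_eq_bot.2 hM)

theorem eval_surjective (hM : IsPowerTorsion I M) : Function.Surjective (eval I M) :=
  fun a ↦ (range_eval M).ge (hM a)

theorem subsingleton_succ_of_injective [Injective M] (i : ℕ) :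
    Subsingleton ((directLimitExt I (i + 1)).obj M) := by
  refine subsingleton_of_forall_eq 0 fun x ↦ ?_
  obtain ⟨t, x, rfl⟩ := exists_of x
  rw [Ext.eq_zero_of_injective x, map_zero]

theorem isPowerTorsion_obj (i : ℕ) (M : ModuleCat.{u} R) :
    IsPowerTorsion I ((directLimitExt I i).obj M) := by
  intro x
  obtain ⟨t, x, rfl⟩ := exists_of x
  refine mem_primaryComponent_iff.2 ⟨t, fun r hr ↦ ?_⟩
  have hr0 : r • 𝟙 ((quotientPowers I).obj (op t)) = 0 :=
    ModuleCat.hom_ext (LinearMap.ext (smul_quotientPowers_eq_zero hr))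
  rw [← map_smul, ← Ext.mk₀_id_comp x, ← Ext.smul_comp, ← Ext.mk₀_smul, hr0, Ext.mk₀_zero,
    Ext.zero_comp, map_zero]

theorem subsingleton_of_bijective_smul {x : R} (hx : x ∈ I)
    (hM : Function.Bijective fun a : M ↦ x • a) (i : ℕ) :
    Subsingleton ((directLimitExt I i).obj M) := by
  have : IsIso (x • 𝟙 M) := (ConcreteCategory.isIso_iff_bijective _).2 hM
  have hinj : Function.Injective ((directLimitExt I i).map (x • 𝟙 M)) :=
    ((ConcreteCategory.isIso_iff_bijective _).1 inferInstance).1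
  refine subsingleton_of_forall_eq 0 fun y ↦ ?_
  obtain ⟨k, hk⟩ := mem_primaryComponent_span_singleton.1
    (primaryComponent_anti ((Ideal.span_singleton_le_iff_mem I).2 hx) (isPowerTorsion_obj i M y))
  clear hM this
  induction k with
  | zero => simpa using hk
  | succ k ih => exact ih (hinj (by rw [map_smul_id, map_zero, smul_smul, ← pow_succ', hk]))

theorem subsingleton_of_subsingleton [Subsingleton M] (i : ℕ) :
    Subsingleton ((directLimitExt I i).obj M) :=
  subsingleton_of_bijective_smul I.zero_mem
    ⟨Function.injective_of_subsingleton _, Function.surjective_to_subsingleton _⟩ i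

section ShortExact

variable {S : ShortComplex (ModuleCat.{u} R)}

theorem subsingleton_X₂ (hS : S.ShortExact) {i : ℕ}
    (h₁ : Subsingleton ((directLimitExt I i).obj S.X₁))
    (h₃ : Subsingleton ((directLimitExt I i).obj S.X₃)) :
    Subsingleton ((directLimitExt I i).obj S.X₂) := by
  refine subsingleton_of_forall_eq 0 fun x ↦ ?_
  obtain ⟨y, rfl⟩ := (exact_map_map hS i x).1 (Subsingleton.elim _ _)
  rw [Subsingleton.elim y 0, map_zero]

theorem δ_surjective (hS : S.ShortExact) {i : ℕ} (_ : Injective S.X₂) :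
    Function.Surjective (δ (I := I) hS i) :=
  have := subsingleton_succ_of_injective (I := I) (M := S.X₂) i
  fun x ↦ (exact_δ_map hS i x).1 (Subsingleton.elim _ _)

theorem subsingleton_X₁ (hS : S.ShortExact) {i : ℕ} (h₂ : Injective S.X₂)
    (_ : Subsingleton ((directLimitExt I i).obj S.X₃)) :
    Subsingleton ((directLimitExt I (i + 1)).obj S.X₁) :=
  (δ_surjective hS h₂).subsingleton

theorem δ_bijective (hS : S.ShortExact) {i : ℕ} (h₂ : Injective S.X₂)
    (h₂' : Subsingleton ((directLimitExt I i).obj S.X₂)) :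
    Function.Bijective (δ (I := I) hS i) := by
  refine ⟨(injective_iff_map_eq_zero _).2 fun x hx ↦ ?_, δ_surjective hS h₂⟩
  obtain ⟨y, rfl⟩ := (exact_map_δ hS i x).1 hx
  rw [Subsingleton.elim y 0, map_zero]

theorem map_g_bijective (hS : S.ShortExact) {i : ℕ}
    (h₁ : Subsingleton ((directLimitExt I i).obj S.X₁))
    (h₁' : Subsingleton ((directLimitExt I (i + 1)).obj S.X₁)) :
    Function.Bijective ((directLimitExt I i).map S.g) := by
  refine ⟨(injective_iff_map_eq_zero _).2 fun x hx ↦ ?_,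
    fun x ↦ (exact_map_δ hS i x).1 (Subsingleton.elim _ _)⟩
  obtain ⟨y, rfl⟩ := (exact_map_map hS i x).1 hx
  rw [Subsingleton.elim y 0, map_zero]

end ShortExact

end directLimitExt

end DirectLimitExt

section Embedding

variable {R : Type u} [CommRing R] {I : Ideal R} {M : ModuleCat.{u} R}

theorem shortExact_cokernelSequence {N : ModuleCat.{u} R} (f : M ⟶ N) [Mono f] :
    (ShortComplex.cokernelSequence f).ShortExact :=
  .mk' (ShortComplex.cokernelSequence_exact f) ‹Mono f› inferInstance

theorem injective_X₃ {S : ShortComplex (ModuleCat.{u} R)} (hS : S.ShortExact)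
    (_ : Injective S.X₁) (h₂ : Injective S.X₂) : Injective S.X₃ :=
  have σ := hS.splittingOfInjective
  Retract.injective (i := h₂) ⟨σ.s, S.g, σ.s_g⟩

variable (I M) in
/-- The short exact sequence `0 → Γ_I(M) → M → M ⧸ Γ_I(M) → 0`. -/
abbrev torsionSequence : ShortComplex (ModuleCat.{u} R) :=
  ModuleCat.shortComplexOfCompEqZero (I.primaryComponent M).subtype (I.primaryComponent M).mkQ
    (LinearMap.ext fun a ↦ (Submodule.Quotient.mk_eq_zero _).2 a.2)

theorem torsionSequence_shortExact : (torsionSequence I M).ShortExact :=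
  ModuleCat.shortComplex_shortExact _ (LinearMap.exact_subtype_mkQ _)
    (Submodule.injective_subtype _) (Submodule.mkQ_surjective _)

theorem injective_torsionSequence_X₁ [IsNoetherianRing R] [Injective M] :
    Injective (torsionSequence I M).X₁ := by
  have : Module.Injective R M :=
    Module.injective_module_of_injective_object R M (inj := ‹Injective M›)
  exact (Module.injective_iff_injective_object R _).1 (injective_primaryComponent_s15 I)

theorem exists_mono_injective_isPowerTorsion [IsNoetherianRing R] (hM : IsPowerTorsion I M) :
    ∃ (E : ModuleCat.{u} R) (f : M ⟶ E), Mono f ∧ Injective E ∧ IsPowerTorsion I E := by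
  let E := Injective.under M
  have hι : Function.Injective (Injective.ι M) := (ModuleCat.mono_iff_injective _).1 inferInstance
  let f : M →ₗ[R] I.primaryComponent E :=
    (Injective.ι M).hom.codRestrict _ fun a ↦ map_mem_primaryComponent _ (hM a)
  have hf : Function.Injective f := (LinearMap.injective_codRestrict_iff _).2 hι
  exact ⟨(torsionSequence I E).X₁, ModuleCat.ofHom f, (ModuleCat.mono_iff_injective _).2 hf,
    injective_torsionSequence_X₁, isPowerTorsion_primaryComponent⟩

theorem exists_mono_injective_primaryComponent_eq_bot [IsNoetherianRing R]
    (hM : I.primaryComponent M = ⊥) :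
    ∃ (E : ModuleCat.{u} R) (f : M ⟶ E), Mono f ∧ Injective E ∧ I.primaryComponent E = ⊥ := by
  let E := Injective.under M
  have hι : Function.Injective (Injective.ι M) := (ModuleCat.mono_iff_injective _).1 inferInstance
  have hf : Function.Injective (Injective.ι M ≫ (torsionSequence I E).g) := by
    refine (injective_iff_map_eq_zero _).2 fun a ha ↦ ?_
    have ha' : Injective.ι M a ∈ I.primaryComponent E := (Submodule.Quotient.mk_eq_zero _).1 ha
    exact (Submodule.eq_bot_iff _).1 hM a ((map_mem_primaryComponent_iff hι).1 ha')
  exact ⟨(torsionSequence I E).X₃, _, (ModuleCat.mono_iff_injective _).2 hf,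
    injective_X₃ torsionSequence_shortExact injective_torsionSequence_X₁
      (inferInstanceAs (Injective (Injective.under M))),
    primaryComponent_quotient_primaryComponent⟩

theorem isPowerTorsion_cokernel {N : ModuleCat.{u} R} (hN : IsPowerTorsion I N) (f : M ⟶ N) :
    IsPowerTorsion I (Limits.cokernel f : ModuleCat R) :=
  hN.of_surjective (f := (Limits.cokernel.π f).hom)
    ((ModuleCat.epi_iff_surjective _).1 inferInstance)

end Embedding

namespace directLimitExt

variable {R : Type u} [CommRing R] {I J K : Ideal R} {M : ModuleCat.{u} R}

theorem subsingleton_of_torsionSequence {n : ℕ}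
    (h₀ : Subsingleton ((directLimitExt K n).obj ((directLimitExt I 0).obj M)))
    (h₃ : Subsingleton ((directLimitExt K n).obj (torsionSequence I M).X₃)) :
    Subsingleton ((directLimitExt K n).obj M) :=
  subsingleton_X₂ (torsionSequence_shortExact (I := I) (M := M))
    ((subsingleton_obj_congr (N := (torsionSequence I M).X₁) (zeroEquiv M) n).1 h₀) h₃

variable [IsNoetherianRing R]

theorem subsingleton_succ_of_isPowerTorsion (i : ℕ) (hM : IsPowerTorsion I M) :
    Subsingleton ((directLimitExt I (i + 1)).obj M) := by
  induction i generalizing M with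
  | zero =>
    obtain ⟨E, f, _, hinj, hE⟩ := exists_mono_injective_isPowerTorsion hM
    have hS := shortExact_cokernelSequence f
    have hδ : Function.Surjective (δ (I := I) hS 0) := δ_surjective hS hinj
    have hπ : Function.Surjective (Limits.cokernel.π f) :=
      (ModuleCat.epi_iff_surjective _).1 inferInstance
    refine subsingleton_of_forall_eq 0 (hδ.forall.2 fun y ↦ (exact_map_δ hS 0 y).2 ?_)
    obtain ⟨e, he⟩ := hπ (eval I _ y)
    obtain ⟨z, rfl⟩ := eval_surjective hE e
    exact ⟨z, eval_injective _ ((eval_map _ z).trans he)⟩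
  | succ i ih =>
    obtain ⟨E, f, _, hinj, hE⟩ := exists_mono_injective_isPowerTorsion hM
    exact subsingleton_X₁ (shortExact_cokernelSequence f) hinj (ih (isPowerTorsion_cokernel hE f))

theorem isPowerTorsion_obj_of_isPowerTorsion (i : ℕ) (hM : IsPowerTorsion J M) :
    IsPowerTorsion J ((directLimitExt I i).obj M) := by
  induction i generalizing M with
  | zero => exact hM.of_injective (eval_injective M)
  | succ i ih =>
    obtain ⟨E, f, _, hinj, hE⟩ := exists_mono_injective_isPowerTorsion hM
    have hS := shortExact_cokernelSequence f
    exact (ih (isPowerTorsion_cokernel hE f)).of_surjective (f := (δ hS i).hom)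
      (δ_surjective hS hinj)

theorem map_torsionSequence_g_bijective (i : ℕ) :
    Function.Bijective ((directLimitExt I (i + 1)).map (torsionSequence I M).g) :=
  map_g_bijective torsionSequence_shortExact
    (subsingleton_succ_of_isPowerTorsion i isPowerTorsion_primaryComponent)
    (subsingleton_succ_of_isPowerTorsion (i + 1) isPowerTorsion_primaryComponent)

variable (I K M) in
/- `C` is the cokernel of an embedding of `M ⧸ Γ_I(M)` into an injective module `E` with
`Γ_I(E) = 0`. -/
theorem exists_dimension_shift :
    ∃ C : ModuleCat.{u} R,
      (∀ q, Nonempty ((directLimitExt I q).obj C ≃ₗ[R] (directLimitExt I (q + 1)).obj M)) ∧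
      ∀ n, Subsingleton ((directLimitExt K n).obj C) →
        Subsingleton ((directLimitExt K (n + 1)).obj (torsionSequence I M).X₃) := by
  obtain ⟨E, f, _, hinj, hE⟩ := exists_mono_injective_primaryComponent_eq_bot
    (I := I) (M := (torsionSequence I M).X₃) primaryComponent_quotient_primaryComponent
  have hS := shortExact_cokernelSequence f
  have hEI : ∀ q, Subsingleton ((directLimitExt I q).obj E)
    | 0 => subsingleton_zero hE
    | q + 1 => subsingleton_succ_of_injective q
  exact ⟨Limits.cokernel f, fun q ↦
    ⟨(LinearEquiv.ofBijective (δ hS q).hom (δ_bijective hS hinj (hEI q))).trans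
      (LinearEquiv.ofBijective _ (map_torsionSequence_g_bijective q)).symm⟩,
    fun _ hn ↦ subsingleton_X₁ hS hinj hn⟩

/- The vanishing statement implied by the Grothendieck spectral sequence
`H^p_K(H^q_I(M)) ⇒ H^{p+q}_K(M)`. -/
theorem subsingleton_of_forall_subsingleton (hIK : I ≤ K) (n : ℕ)
    (h : ∀ p q, p + q = n →
      Subsingleton ((directLimitExt K p).obj ((directLimitExt I q).obj M))) :
    Subsingleton ((directLimitExt K n).obj M) := by
  induction n generalizing M with
  | zero =>
    exact subsingleton_of_torsionSequence (h 0 0 rfl) (subsingleton_zero (eq_bot_iff.2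
      ((primaryComponent_anti hIK).trans primaryComponent_quotient_primaryComponent.le)))
  | succ n ih =>
    obtain ⟨C, hI, hK⟩ := exists_dimension_shift I K M
    refine subsingleton_of_torsionSequence (h (n + 1) 0 rfl) (hK n (ih fun p q hpq ↦ ?_))
    obtain ⟨e⟩ := hI q
    exact (subsingleton_obj_congr e p).2 (h p (q + 1) (by lia))

theorem bijective_smul_quotient_primaryComponent {E : ModuleCat.{u} R} [Injective E] (f : E ⟶ M)
    [Epi f] (x : R) :
    Function.Bijective fun a : M ⧸ (Ideal.span {x}).primaryComponent M ↦ x • a := by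
  have hf : Function.Surjective f := (ModuleCat.epi_iff_surjective _).1 inferInstance
  have : Module.Injective R E :=
    Module.injective_module_of_injective_object R E (inj := ‹Injective E›)
  constructor
  · refine (injective_iff_map_eq_zero (DistribSMul.toAddMonoidHom _ x)).2 fun a ha ↦ ?_
    exact (Submodule.eq_bot_iff _).1 primaryComponent_quotient_primaryComponent a
      (mem_primaryComponent_span_singleton.2 ⟨1, by simpa using ha⟩)
  · refine (Submodule.mkQ_surjective _).forall.2 (hf.forall.2 fun e ↦ ?_)
    obtain ⟨b, hb⟩ := exists_sub_smul_mem_primaryComponent_span_singleton x e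
    refine ⟨Submodule.Quotient.mk (f b), ((Submodule.Quotient.eq _).2 ?_).symm⟩
    simpa using map_mem_primaryComponent f.hom hb

theorem subsingleton_succ_of_epi {E : ModuleCat.{u} R} [Injective E] (f : E ⟶ M) [Epi f] (x : R)
    (i : ℕ) : Subsingleton ((directLimitExt (Ideal.span {x}) (i + 1)).obj M) :=
  have := subsingleton_of_bijective_smul (M := (torsionSequence (Ideal.span {x}) M).X₃)
    (Ideal.mem_span_singleton_self x) (bijective_smul_quotient_primaryComponent f x) (i + 1)
  (Equiv.ofBijective _ (map_torsionSequence_g_bijective i)).subsingleton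

theorem subsingleton_span_singleton (x : R) (i : ℕ) :
    Subsingleton ((directLimitExt (Ideal.span {x}) (i + 2)).obj M) :=
  subsingleton_X₁ (shortExact_cokernelSequence (Injective.ι M))
    (inferInstanceAs (Injective (Injective.under M)))
    (subsingleton_succ_of_epi (Limits.cokernel.π (Injective.ι M)) x i)

theorem subsingleton_of_card_lt (s : Finset R) (hs : (s : Set R) ⊆ K)
    (hK : K ≤ (J ⊔ Ideal.span s).radical) (hM : IsPowerTorsion J M) {p : ℕ} (hp : s.card < p) :
    Subsingleton ((directLimitExt K p).obj M) := by
  classical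
  induction s using Finset.induction_on generalizing M J p with
  | empty =>
    obtain ⟨p, rfl⟩ := Nat.exists_eq_succ_of_ne_zero (Nat.ne_zero_of_lt hp)
    exact subsingleton_succ_of_isPowerTorsion p (hM.of_le_radical (by simpa using hK))
  | insert x s hx ih =>
    rw [Finset.coe_insert] at hs hK
    rw [Finset.card_insert_of_notMem hx] at hp
    refine subsingleton_of_forall_subsingleton (I := Ideal.span {x})
      ((Ideal.span_singleton_le_iff_mem K).2 (hs (Set.mem_insert x s))) p fun a b hab ↦ ?_
    match b with
    | 0 | 1 =>
      refine ih (J := J ⊔ Ideal.span {x}) ((Set.subset_insert x s).trans hs) ?_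
        ((isPowerTorsion_obj_of_isPowerTorsion _ hM).sup (isPowerTorsion_obj _ M)) (by lia)
      rwa [sup_assoc, ← Ideal.span_union, Set.singleton_union]
    | b + 2 =>
      have := subsingleton_span_singleton (M := M) x b
      exact subsingleton_of_subsingleton a

end directLimitExt

theorem ne_top_of_ringKrullDim_quotient_eq {R : Type*} [CommRing R] {J : Ideal R} {d : ℕ}
    (hd : ringKrullDim (R ⧸ J) = d) : J ≠ ⊤ := by
  rintro rfl
  have : Subsingleton (R ⧸ (⊤ : Ideal R)) := Ideal.Quotient.subsingleton_iff.2 rfl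
  exact WithBot.bot_ne_coe (ringKrullDim_eq_bot_of_subsingleton.symm.trans hd)

section Local

open IsLocalRing

variable {R : Type u} [CommRing R] [IsLocalRing R]

theorem isPowerTorsion_maximalIdeal_of_isArtinian {A : Type*} [AddCommGroup A] [Module R A]
    [IsArtinian R A] : IsPowerTorsion (maximalIdeal R) A := by
  intro a
  have : IsArtinian R (R ⧸ Ideal.torsionOf R A a) :=
    (Ideal.quotTorsionOfEquivSpanSingleton R A a).symm.isArtinian_iff.1 inferInstance
  have : IsArtinianRing (R ⧸ Ideal.torsionOf R A a) := isArtinian_of_tower R this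
  obtain ⟨k, hk⟩ := exists_maximalIdeal_pow_le_of_isArtinianRing_quotient (Ideal.torsionOf R A a)
  exact mem_primaryComponent_iff.2 ⟨k, fun r hr ↦ hk hr⟩

variable [IsNoetherianRing R]

variable (R) in
theorem exists_finset_card_eq_ringKrullDim_and_radical_span_eq_maximalIdeal :
    ∃ s : Finset R, (s.card : WithBot ℕ∞) = ringKrullDim R ∧
      (Ideal.span (s : Set R)).radical = maximalIdeal R := by
  obtain ⟨s, hs, hcard⟩ := (maximalIdeal R).exists_finset_card_eq_height_of_isNoetherianRing
  refine ⟨s, ?_, le_antisymm ((maximalIdeal.isMaximal R).isPrime.radical_le_iff.2 hs.1.2) ?_⟩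
  · rw [← maximalIdeal_height_eq_ringKrullDim, ← hcard]
    rfl
  · rw [← Ideal.sInf_minimalPrimes]
    exact le_sInf fun q hq ↦ hs.2 hq.1 (le_maximalIdeal hq.1.1.ne_top)

theorem exists_finset_card_le_and_radical_sup_span_eq_maximalIdeal {J : Ideal R} {d : ℕ}
    (hd : ringKrullDim (R ⧸ J) = d) :
    ∃ s : Finset R, s.card ≤ d ∧ (J ⊔ Ideal.span (s : Set R)).radical = maximalIdeal R := by
  classical
  have : Nontrivial (R ⧸ J) :=
    Ideal.Quotient.nontrivial_iff.2 (ne_top_of_ringKrullDim_quotient_eq hd)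
  have : IsLocalRing (R ⧸ J) := .of_surjective' (Ideal.Quotient.mk J) Ideal.Quotient.mk_surjective
  obtain ⟨t, ht, hrad⟩ :=
    exists_finset_card_eq_ringKrullDim_and_radical_span_eq_maximalIdeal (R ⧸ J)
  let σ : R ⧸ J → R := Function.surjInv Ideal.Quotient.mk_surjective
  have hσ : ∀ y, Ideal.Quotient.mk J (σ y) = y := Function.surjInv_eq _
  have hmap : (Ideal.span ((t.image σ : Finset R) : Set R)).map (Ideal.Quotient.mk J) =
      Ideal.span (t : Set (R ⧸ J)) := by
    simp only [Ideal.map_span, Finset.coe_image, Set.image_image, hσ, Set.image_id']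
  refine ⟨t.image σ, Finset.card_image_le.trans ?_, ?_⟩
  · exact_mod_cast (ht.trans hd).le
  · rw [← Ideal.comap_map_quotientMk, hmap, ← Ideal.comap_radical, hrad]
    exact eq_maximalIdeal (Ideal.comap_isMaximal_of_surjective _ Ideal.Quotient.mk_surjective)

theorem directLimitExt.subsingleton_of_ringKrullDim_lt {J : Ideal R} {M : ModuleCat.{u} R}
    {d p : ℕ} (hd : ringKrullDim (R ⧸ J) = d) (hM : IsPowerTorsion J M) (hp : d < p) :
    Subsingleton ((directLimitExt (maximalIdeal R) p).obj M) := by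
  obtain ⟨s, hsd, hs⟩ := exists_finset_card_le_and_radical_sup_span_eq_maximalIdeal hd
  have hsub : (s : Set R) ⊆ maximalIdeal R :=
    Ideal.span_le.1 (le_sup_right.trans (Ideal.le_radical.trans hs.le))
  exact subsingleton_of_card_lt s hsub hs.ge hM (hsd.trans_lt hp)

end Local

section Homology

variable {R : Type*} [Ring R] {ι : Type*} {c : ComplexShape ι}
  {K : HomologicalComplex (ModuleCat R) c} {i j k : ι}

theorem iCycles_injective : Function.Injective (K.iCycles j) :=
  (ModuleCat.mono_iff_injective _).1 inferInstance

theorem exists_iCycles_eq (hk : c.next j = k) {x : K.X j} (hx : K.d j k x = 0) :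
    ∃ z, K.iCycles j z = x :=
  have hex := (ShortComplex.ShortExact.moduleCat_exact_iff_function_exact _).1
    (ShortComplex.exact_of_f_is_kernel (.mk _ _ (K.iCycles_d j k)) (K.cyclesIsKernel j k hk))
  (hex x).1 hx

theorem homologyπ_eq_zero_iff (hi : c.prev j = i) (z : K.cycles j) :
    K.homologyπ j z = 0 ↔ ∃ y, K.d i j y = K.iCycles j z := by
  have hex := (ShortComplex.ShortExact.moduleCat_exact_iff_function_exact _).1
    (ShortComplex.exact_of_g_is_cokernel (.mk _ _ (K.toCycles_comp_homologyπ i j))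
      (K.homologyIsCokernel i j hi))
  refine (hex z).trans (exists_congr fun y ↦ ?_)
  rw [← iCycles_injective.eq_iff, ← ModuleCat.comp_apply, HomologicalComplex.toCycles_i]

end Homology

section EquivOfKerEq

variable {R A B C : Type*} [Ring R] [AddCommGroup A] [AddCommGroup B] [AddCommGroup C]
  [Module R A] [Module R B] [Module R C] {f : A →ₗ[R] B} {g : A →ₗ[R] C}

/-- Two surjective linear maps with the same kernel have isomorphic targets. -/
noncomputable def equivOfKerEqKer (hf : Function.Surjective f) (hg : Function.Surjective g)
    (h : LinearMap.ker f = LinearMap.ker g) : B ≃ₗ[R] C :=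
  (f.quotKerEquivOfSurjective hf).symm.trans
    ((Submodule.quotEquivOfEq _ _ h).trans (g.quotKerEquivOfSurjective hg))

theorem equivOfKerEqKer_apply (hf : Function.Surjective f) (hg : Function.Surjective g)
    (h : LinearMap.ker f = LinearMap.ker g) (a : A) : equivOfKerEqKer hf hg h (f a) = g a := by
  have ha : (f.quotKerEquivOfSurjective hf).symm (f a) = Submodule.Quotient.mk a :=
    (LinearEquiv.symm_apply_eq _).2 rfl
  simp only [equivOfKerEqKer, LinearEquiv.trans_apply, ha]
  rfl

end EquivOfKerEq

section ExtComparison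

variable {R : Type u} [CommRing R] {X X' : ModuleCat.{u} R}

/-- The map of Hom complexes `Hom(P, Y) ⟶ Hom(P', Y)` induced by `φ : P' ⟶ P`. -/
noncomputable def linearYonedaMap {P P' : ChainComplex (ModuleCat.{u} R) ℕ} (φ : P' ⟶ P)
    (Y : ModuleCat.{u} R) : P.linearYonedaObj R Y ⟶ P'.linearYonedaObj R Y :=
  (HomologicalComplex.unopFunctor _ _).map
    ((((linearYoneda R (ModuleCat.{u} R)).obj Y).rightOp.mapHomologicalComplex _).map φ).op

/-- The complex `Hom(P, Y)`, whose homology is `Ext(X, Y)`. -/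
noncomputable abbrev homComplex (P : ProjectiveResolution X) (Y : ModuleCat.{u} R) :
    CochainComplex (ModuleCat.{u} R) ℕ :=
  P.complex.linearYonedaObj R Y

variable (P : ProjectiveResolution X) {P' : ProjectiveResolution X'} {f : X' ⟶ X}
  (φ : ProjectiveResolution.Hom P' P f) (Y : ModuleCat.{u} R) (n : ℕ)

variable {P} in
theorem isoExt_inv_naturality :
    (P.isoExt n Y).inv ≫ ((_root_.Ext R (ModuleCat.{u} R) n).map f.op).app Y =
      HomologicalComplex.homologyMap (linearYonedaMap φ.hom Y) n ≫ (P'.isoExt n Y).inv := by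
  have h₁ := congr($(ProjectiveResolution.isoLeftDerivedObj_hom_naturality f P' P φ.hom
    (by simpa using φ.hom_f_zero_comp_π_f_zero)
    ((linearYoneda R (ModuleCat.{u} R)).obj Y).rightOp n).unop)
  have h₂ := congr($(HomologicalComplex.homologyOp_hom_naturality (linearYonedaMap φ.hom Y) n).unop)
  exact (Category.assoc _ _ _).trans ((congr(_ ≫ $h₁)).trans
    ((Category.assoc _ _ _).symm.trans ((congr($h₂ ≫ _)).trans (Category.assoc _ _ _))))

/-- The class in the left derived `Ext^n(X, Y)` of an `n`-cocycle of `Hom(P, Y)`. -/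
noncomputable def cyclesToDerivedExt : (homComplex P Y).cycles n ⟶
    ((_root_.Ext R (ModuleCat.{u} R) n).obj (op X)).obj Y :=
  (homComplex P Y).homologyπ n ≫ (P.isoExt n Y).inv

theorem cyclesToDerivedExt_surjective : Function.Surjective (cyclesToDerivedExt P Y n) :=
  (ModuleCat.epi_iff_surjective _).1 (epi_comp _ _)

theorem cyclesToDerivedExt_eq_zero_iff (z : (homComplex P Y).cycles n) :
    cyclesToDerivedExt P Y n z = 0 ↔
      ∃ y, (homComplex P Y).d (n - 1) n y =
        (homComplex P Y).iCycles n z :=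
  (P.isoExt n Y).symm.toLinearEquiv.map_eq_zero_iff.trans
    (homologyπ_eq_zero_iff (by cases n <;> simp) z)

variable {P} in
theorem map_cyclesToDerivedExt (z : (homComplex P Y).cycles n) :
    ((_root_.Ext R (ModuleCat.{u} R) n).map f.op).app Y (cyclesToDerivedExt P Y n z) =
      cyclesToDerivedExt P' Y n (HomologicalComplex.cyclesMap (linearYonedaMap φ.hom Y) n z) := by
  have h : cyclesToDerivedExt P Y n ≫ ((_root_.Ext R (ModuleCat.{u} R) n).map f.op).app Y =
      HomologicalComplex.cyclesMap (linearYonedaMap φ.hom Y) n ≫ cyclesToDerivedExt P' Y n := by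
    rw [cyclesToDerivedExt, cyclesToDerivedExt, Category.assoc, isoExt_inv_naturality φ,
      HomologicalComplex.homologyπ_naturality_assoc]
  exact congr($h z)

theorem d_comp_iCycles (z : (homComplex P Y).cycles n) :
    P.complex.d (n + 1) n ≫ ((homComplex P Y).iCycles n z : P.complex.X n ⟶ Y) = 0 :=
  congr($((homComplex P Y).iCycles_d n (n + 1)) z)

/-- The class in `Abelian.Ext X Y n` of an `n`-cocycle of `Hom(P, Y)`. -/
noncomputable def cyclesToAbelianExt :
    (homComplex P Y).cycles n →ₗ[R] Ext X Y n where
  toFun z := P.extMk ((homComplex P Y).iCycles n z) (n + 1) rfl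
    (d_comp_iCycles P Y n z)
  map_add' z w := by
    refine Eq.trans ?_ (P.add_extMk _ _ _ _ _ _).symm
    congr 1
    exact map_add _ z w
  map_smul' r z := by
    refine Eq.trans ?_ ((Ext.smul_eq_comp_mk₀ _ _).trans (P.extMk_comp_mk₀ _ _ _ _ (r • 𝟙 Y))).symm
    congr 1
    exact (map_smul _ r z).trans ((Linear.comp_smul ..).trans congr(r • $(Category.comp_id _))).symm

theorem cyclesToAbelianExt_surjective : Function.Surjective (cyclesToAbelianExt P Y n) := by
  intro y
  obtain ⟨f, hf, rfl⟩ := P.extMk_surjective y (n + 1) rfl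
  obtain ⟨z, rfl⟩ :=
    exists_iCycles_eq (K := homComplex P Y) (k := n + 1) (by simp) (x := f) hf
  exact ⟨z, rfl⟩

theorem extMk_zero_eq_zero_iff {Y : ModuleCat.{u} R} (f : P.complex.X 0 ⟶ Y)
    (hf : P.complex.d 1 0 ≫ f = 0) : P.extMk f 1 rfl hf = 0 ↔ f = 0 := by
  refine ⟨fun h ↦ ?_, ?_⟩
  · rw [← P.extEquivCohomologyClass.apply_eq_iff_eq,
      ProjectiveResolution.extEquivCohomologyClass_extMk,
      ProjectiveResolution.extEquivCohomologyClass_zero,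
      CochainComplex.HomComplex.CohomologyClass.mk_eq_zero_iff,
      CochainComplex.HomComplex.Cocycle.toSingleMk_mem_coboundaries_iff _ _ _ _ _ 1 (by simp)] at h
    obtain ⟨g, hg⟩ := h
    rw [← cancel_epi (P.cochainComplexXIso (-(0 : ℕ)) 0 rfl).hom, ← hg, Limits.comp_zero,
      (P.cochainComplex.isZero_of_isStrictlyLE 0 1 (by simp)).eq_of_src g 0, Limits.comp_zero]
  · rintro rfl
    exact P.extMk_zero 1 rfl

theorem cyclesToAbelianExt_eq_zero_iff (z : (homComplex P Y).cycles n) :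
    cyclesToAbelianExt P Y n z = 0 ↔
      ∃ y, (homComplex P Y).d (n - 1) n y =
        (homComplex P Y).iCycles n z := by
  cases n with
  | zero =>
    rw [(homComplex P Y).shape _ _ (by simp)]
    exact (extMk_zero_eq_zero_iff P _ (d_comp_iCycles P Y 0 z)).trans
      ⟨fun h ↦ ⟨0, h.symm⟩, fun ⟨_, h⟩ ↦ h.symm⟩
  | succ n => exact P.extMk_eq_zero_iff _ _ rfl (d_comp_iCycles P Y _ z) n rfl

variable {P} in
theorem mk₀_comp_cyclesToAbelianExt (z : (homComplex P Y).cycles n) :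
    (Ext.mk₀ f).comp (cyclesToAbelianExt P Y n z) (zero_add n) =
      cyclesToAbelianExt P' Y n (HomologicalComplex.cyclesMap (linearYonedaMap φ.hom Y) n z) := by
  refine (ProjectiveResolution.mk₀_comp_extMk _ _ rfl (d_comp_iCycles P Y n z) φ).trans ?_
  unfold cyclesToAbelianExt
  dsimp
  congr 1
  exact congr($(HomologicalComplex.cyclesMap_i (linearYonedaMap φ.hom Y) n) z).symm

variable (X) in
/-- The isomorphism between the left derived `Ext` and `Abelian.Ext`: both are the cocycles of
`Hom(P, Y)` modulo coboundaries, for a projective resolution `P` of `X`. -/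
noncomputable def extComparison :
    ((_root_.Ext R (ModuleCat.{u} R) n).obj (op X)).obj Y ≃ₗ[R] Ext X Y n :=
  equivOfKerEqKer (f := (cyclesToDerivedExt (projectiveResolution X) Y n).hom)
    (cyclesToDerivedExt_surjective _ Y n) (cyclesToAbelianExt_surjective _ Y n) (by
      ext z
      exact (cyclesToDerivedExt_eq_zero_iff _ Y n z).trans
        (cyclesToAbelianExt_eq_zero_iff _ Y n z).symm)

theorem extComparison_cyclesToDerivedExt
    (z : (homComplex (projectiveResolution X) Y).cycles n) :
    extComparison X Y n (cyclesToDerivedExt _ Y n z) = cyclesToAbelianExt _ Y n z :=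
  equivOfKerEqKer_apply ..

variable (f) in
theorem extComparison_naturality (x : ((_root_.Ext R (ModuleCat.{u} R) n).obj (op X)).obj Y) :
    extComparison X' Y n (((_root_.Ext R (ModuleCat.{u} R) n).map f.op).app Y x) =
      (Ext.mk₀ f).comp (extComparison X Y n x) (zero_add n) := by
  obtain ⟨z, rfl⟩ := cyclesToDerivedExt_surjective (projectiveResolution X) Y n x
  let φ : ProjectiveResolution.Hom (projectiveResolution X') (projectiveResolution X) f :=
    { hom := ProjectiveResolution.lift f _ _
      hom_f_zero_comp_π_f_zero := by
        simpa using ProjectiveResolution.lift_commutes_zero f _ _ }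
  rw [map_cyclesToDerivedExt φ, extComparison_cyclesToDerivedExt, extComparison_cyclesToDerivedExt,
    mk₀_comp_cyclesToAbelianExt φ]

end ExtComparison

section LocalCohomology

variable {R : Type u} [CommRing R] (I : Ideal R) (i : ℕ) (M : ModuleCat.{u} R)

/-- The diagram of the left derived modules `Ext^i(R ⧸ I ^ t, M)`, whose colimit is `H^i_I(M)`. -/
noncomputable abbrev derivedExtDiagram : ℕᵒᵖᵒᵖ ⥤ ModuleCat.{u} R :=
  localCohomology.diagram (localCohomology.idealPowersDiagram I) i ⋙ (evaluation _ _).obj M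

/-- The comparison of the two constructions of `Ext^i(R ⧸ I ^ t, M)`. -/
noncomputable def derivedExtDiagramEquiv (t : ℕᵒᵖᵒᵖ) :
    (derivedExtDiagram I i M).obj t ≃ₗ[R] Ext ((quotientPowers I).obj t.unop) M i :=
  extComparison _ M i

variable {I i M} in
theorem derivedExtDiagramEquiv_map {s t : ℕᵒᵖᵒᵖ} (f : s ⟶ t) (x : (derivedExtDiagram I i M).obj s) :
    derivedExtDiagramEquiv I i M t ((derivedExtDiagram I i M).map f x) =
      extTransition I i M s.unop.unop t.unop.unop (leOfHom f.unop.unop)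
        (derivedExtDiagramEquiv I i M s x) :=
  extComparison_naturality _ M i x

/-- `directLimitExt` as a cocone over the left derived modules `Ext^i(R ⧸ I ^ t, M)`. -/
noncomputable def directLimitExtCocone : Limits.Cocone (derivedExtDiagram I i M) where
  pt := (directLimitExt I i).obj M
  ι.app t := ModuleCat.ofHom
    (directLimitExt.of I i t.unop.unop M ∘ₗ (derivedExtDiagramEquiv I i M t).toLinearMap)
  ι.naturality s t f := by
    ext x
    exact (congrArg (directLimitExt.of I i t.unop.unop M) (derivedExtDiagramEquiv_map f x)).trans
      Module.DirectLimit.of_f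

/-- The map out of `directLimitExt` induced by a cocone over the left derived modules
`Ext^i(R ⧸ I ^ t, M)`. -/
noncomputable def directLimitExtDesc (s : Limits.Cocone (derivedExtDiagram I i M)) :
    (directLimitExt I i).obj M →ₗ[R] s.pt :=
  Module.DirectLimit.lift R ℕ _ (extTransition I i M)
    (fun t ↦ (s.ι.app (op (op t))).hom ∘ₗ
      (derivedExtDiagramEquiv I i M (op (op t))).symm.toLinearMap) fun t v h x ↦ by
      obtain ⟨x, rfl⟩ := (derivedExtDiagramEquiv I i M (op (op t))).surjective x
      simp only [LinearMap.comp_apply, LinearEquiv.coe_coe, LinearEquiv.symm_apply_apply]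
      rw [← derivedExtDiagramEquiv_map (s := op (op t)) (t := op (op v)) (homOfLE h).op.op x,
        LinearEquiv.symm_apply_apply]
      exact congr($(s.w (homOfLE h).op.op) x)

theorem directLimitExtDesc_of (s : Limits.Cocone (derivedExtDiagram I i M)) (t : ℕ)
    (x : (derivedExtDiagram I i M).obj (op (op t))) :
    directLimitExtDesc I i M s
        (directLimitExt.of I i t M (derivedExtDiagramEquiv I i M (op (op t)) x)) =
      s.ι.app (op (op t)) x :=
  (Module.DirectLimit.lift_of ..).trans
    (congrArg (s.ι.app (op (op t))) ((derivedExtDiagramEquiv I i M (op (op t))).symm_apply_apply x))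

/-- `directLimitExt` is the colimit of the left derived modules `Ext^i(R ⧸ I ^ t, M)`. -/
noncomputable def isColimitDirectLimitExtCocone :
    Limits.IsColimit (directLimitExtCocone I i M) where
  desc s := ModuleCat.ofHom (directLimitExtDesc I i M s)
  fac s t := by
    ext x
    exact directLimitExtDesc_of I i M s t.unop.unop x
  uniq s m hm := by
    ext x
    obtain ⟨t, x, rfl⟩ := directLimitExt.exists_of x
    obtain ⟨x, rfl⟩ := (derivedExtDiagramEquiv I i M (op (op t))).surjective x
    exact (congr($(hm (op (op t))) x)).trans (directLimitExtDesc_of I i M s t x).symm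

/-- Local cohomology computed with `Abelian.Ext`. -/
noncomputable def localCohomologyEquiv :
    (localCohomology I i).obj M ≃ₗ[R] (directLimitExt I i).obj M :=
  haveI := localCohomology.hasColimitDiagram.{u, 0} (localCohomology.idealPowersDiagram I) i
  ((Limits.isColimitOfPreserves ((evaluation _ _).obj M) (Limits.colimit.isColimit
    (localCohomology.diagram (localCohomology.idealPowersDiagram I) i))).coconePointUniqueUpToIso
      (isColimitDirectLimitExtCocone I i M)).toLinearEquiv

end LocalCohomology

section CohomologicalDimension

variable {R : Type u} [CommRing R] {I K : Ideal R} {M : ModuleCat.{u} R} {p q : ℕ}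

theorem le_cohomologicalDimension (h : Nontrivial ((localCohomology I q).obj M)) :
    q ≤ cohomologicalDimension I M :=
  le_sSup ⟨q, rfl, h⟩

theorem nontrivial_localCohomology_localCohomology_iff :
    Nontrivial ((localCohomology K p).obj ((localCohomology I q).obj M)) ↔
      Nontrivial ((directLimitExt K p).obj ((directLimitExt I q).obj M)) := by
  rw [(localCohomologyEquiv K p _).toEquiv.nontrivial_congr, ← not_subsingleton_iff_nontrivial,
    ← not_subsingleton_iff_nontrivial,
    directLimitExt.subsingleton_obj_congr (localCohomologyEquiv I q M) p]

theorem nontrivial_of_nontrivial_localCohomology (h : Nontrivial ((localCohomology K p).obj M)) :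
    Nontrivial M := by
  by_contra hM
  rw [not_nontrivial_iff_subsingleton] at hM
  rw [(localCohomologyEquiv K p M).toEquiv.nontrivial_congr] at h
  exact not_subsingleton _ (directLimitExt.subsingleton_of_subsingleton (I := K) (M := M) p)

variable [IsNoetherianRing R]

theorem isPowerTorsion_localCohomology :
    IsPowerTorsion (I ⊔ Module.annihilator R M) ((localCohomology I q).obj M) :=
  ((directLimitExt.isPowerTorsion_obj q M).sup
    (directLimitExt.isPowerTorsion_obj_of_isPowerTorsion q
      (isPowerTorsion_of_le_annihilator le_rfl))).of_injective
    (f := (localCohomologyEquiv I q M).toLinearMap) (LinearEquiv.injective _)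

theorem exists_nontrivial_localCohomology_localCohomology {n : ℕ} (hIK : I ≤ K)
    (h : Nontrivial ((localCohomology K n).obj M)) :
    ∃ p q, p + q = n ∧ Nontrivial ((localCohomology K p).obj ((localCohomology I q).obj M)) := by
  simp only [nontrivial_localCohomology_localCohomology_iff]
  by_contra! h'
  rw [(localCohomologyEquiv K n M).toEquiv.nontrivial_congr] at h
  exact not_subsingleton _ (directLimitExt.subsingleton_of_forall_subsingleton hIK n h')

theorem eq_zero_of_isPowerTorsion_of_nontrivial_localCohomology (hM : IsPowerTorsion K M)
    (h : Nontrivial ((localCohomology K p).obj M)) : p = 0 := by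
  by_contra hp
  obtain ⟨p, rfl⟩ := Nat.exists_eq_succ_of_ne_zero hp
  rw [(localCohomologyEquiv K _ M).toEquiv.nontrivial_congr] at h
  exact not_subsingleton _ (directLimitExt.subsingleton_succ_of_isPowerTorsion p hM)

theorem le_of_isPowerTorsion_of_nontrivial_localCohomology [IsLocalRing R] {J : Ideal R} {d : ℕ}
    (hd : ringKrullDim (R ⧸ J) = d) (hM : IsPowerTorsion J M)
    (h : Nontrivial ((localCohomology (IsLocalRing.maximalIdeal R) p).obj M)) : p ≤ d := by
  by_contra! hp
  rw [(localCohomologyEquiv _ p M).toEquiv.nontrivial_congr] at h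
  exact not_subsingleton _ (directLimitExt.subsingleton_of_ringKrullDim_lt hd hM hp)

theorem cd_eq_dim_or_exists_nontrivial_of_isArtinian_top_localCohomology_general [IsLocalRing R]
    {n d c : ℕ} (hne : Nontrivial ((localCohomology (IsLocalRing.maximalIdeal R) n).obj M))
    (hd : ringKrullDim (R ⧸ (I + Module.annihilator R M)) = d)
    (hc : cohomologicalDimension I M = c)
    (htors : IsPowerTorsion (IsLocalRing.maximalIdeal R) ((localCohomology I c).obj M)) :
    c = n ∨ ∃ i, n - d ≤ i ∧ i < c ∧
      Nontrivial ((localCohomology (IsLocalRing.maximalIdeal R) (n - i)).obj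
        ((localCohomology I i).obj M)) := by
  have hI : I ≤ IsLocalRing.maximalIdeal R :=
    le_sup_left.trans (IsLocalRing.le_maximalIdeal (ne_top_of_ringKrullDim_quotient_eq hd))
  obtain ⟨p, q, rfl, hpq⟩ := exists_nontrivial_localCohomology_localCohomology hI hne
  have hpd : p ≤ d :=
    le_of_isPowerTorsion_of_nontrivial_localCohomology hd isPowerTorsion_localCohomology hpq
  have hqc : q ≤ c := by
    exact_mod_cast hc ▸ le_cohomologicalDimension (nontrivial_of_nontrivial_localCohomology hpq)
  obtain rfl | hlt := hqc.eq_or_lt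
  · left
    rw [eq_zero_of_isPowerTorsion_of_nontrivial_localCohomology htors hpq, zero_add]
  · exact .inr ⟨q, by lia, hlt, by rwa [Nat.add_sub_cancel]⟩

end CohomologicalDimension

/-- over a Noetherian local ring, if `M` has Krull dimension `n` with
`H^n_m(M) ≠ 0`, `dim (R/(I + Ann M)) = d`, and `H^{cd(I,M)}_I(M)` is Artinian, then either
`cd(I,M) = n` or `H^{n-i}_m(H^i_I(M)) ≠ 0` for some `n - d ≤ i < cd(I,M)`. -/
theorem cd_eq_dim_or_exists_nontrivial_of_isArtinian_top_localCohomology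
    (R : Type u) [CommRing R] [IsNoetherianRing R] [IsLocalRing R]
    (M : ModuleCat.{u} R) (n : ℕ)
    (hn : Order.krullDim (Module.support R M) = (n : WithBot ℕ∞))
    (hne : Nontrivial ((localCohomology (IsLocalRing.maximalIdeal R) n).obj M))
    (I : Ideal R) (d : ℕ)
    (hd : ringKrullDim (R ⧸ (I + Module.annihilator R M)) = (d : WithBot ℕ∞))
    (c : ℕ) (hc : cohomologicalDimension I M = (c : ℕ∞))
    (hart : IsArtinian R ((localCohomology I c).obj M)) :
    c = n ∨ ∃ i, n - d ≤ i ∧ i < c ∧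
      Nontrivial ((localCohomology (IsLocalRing.maximalIdeal R) (n - i)).obj
        ((localCohomology I i).obj M)) :=
  cd_eq_dim_or_exists_nontrivial_of_isArtinian_top_localCohomology_general hne hd hc
    isPowerTorsion_maximalIdeal_of_isArtinian
end
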